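/- arXiv:math-ph/9905008 — 4 statements merged into one kernel-verified Lean document; each statement's English description precedes it below -/
import Mathlib

section
/- Let λ ∈ ℝ \ {0}, let α ∈ (0,1) be irrational, and let E belong to the spectrum of H_{λ,α,θ'} for some θ' ∈ [0,1). Then lim_{n→∞} (1/|s_n|)·ln‖M(λ,E,s_n)‖ = 0. -/
open scoped Classical

noncomputable section

/-- The Sturmian potential `v_{α,θ}(n) = χ_{[1-α,1)}(nα + θ mod 1)`. -/
def sturmian (α θ : ℝ) (n : ℤ) : ℝ :=
  if Int.fract (n * α + θ) ∈ Set.Ico (1 - α) 1 then 1 else 0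

/-- Iterates of the Gauss map, starting at `α`. -/
def cfGauss (α : ℝ) : ℕ → ℝ
  | 0 => α
  | n + 1 => Int.fract (cfGauss α n)⁻¹

/-- The continued fraction coefficients `a_n` of `α = [a_1, a_2, …]` (for `n ≥ 1`):
`a_1 = ⌊1/α⌋`, `a_2 = ⌊1/fract(1/α)⌋`, … . -/
def cfCoeff (α : ℝ) (n : ℕ) : ℕ := ⌊(cfGauss α (n - 1))⁻¹⌋₊

/-- The standard words, with an index shift: `sWord a n` is `s_{n-1}`.  Thus
`sWord a 0 = s_{-1} = 1`, `sWord a 1 = s_0 = 0`, `sWord a 2 = s_1 = 0^{a_1 - 1} 1`, and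
`sWord a (n+1) = s_n = s_{n-1}^{a_n} s_{n-2}` for `n ≥ 2`. -/
def sWord (a : ℕ → ℕ) : ℕ → List ℝ
  | 0 => [1]
  | 1 => [0]
  | 2 => List.replicate (a 1 - 1) (0 : ℝ) ++ [1]
  | n + 3 => (List.replicate (a (n + 2)) (sWord a (n + 2))).flatten ++ sWord a (n + 1)

/-- The `n`-th letter (for `n ≥ 1`) of the one-sided infinite word `c_α = lim s_n`:
since `|s_n| ≥ n`, it is the `n`-th letter of `s_n`. -/
def cword (α : ℝ) (n : ℕ) : ℝ := (sWord (cfCoeff α) (n + 1)).getD (n - 1) 0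

/-- `w` is a (finite) prefix of the one-sided infinite word `c_α`. -/
def IsPrefC (α : ℝ) (w : List ℝ) : Prop :=
  w = (List.range w.length).map fun i => cword α (i + 1)

/-- The one-step transfer matrix `T(λ,E,a) = [[E - λa, -1], [1, 0]]`. -/
def transferT (lam : ℝ) (E : ℂ) (a : ℝ) : Matrix (Fin 2) (Fin 2) ℂ :=
  !![E - lam * a, -1; 1, 0]

/-- The transfer matrix over a word `w = w_1 … w_n`:
`M(λ,E,w) = T(λ,E,w_n) ⋯ T(λ,E,w_1)`. -/
def transferM (lam : ℝ) (E : ℂ) : List ℝ → Matrix (Fin 2) (Fin 2) ℂ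
  | [] => 1
  | a :: w => transferM lam E w * transferT lam E a

/-- The operator norm on `ℂ²` (with the euclidean norm) of a `2 × 2` complex matrix. -/
def opNorm (A : Matrix (Fin 2) (Fin 2) ℂ) : ℝ :=
  ‖Matrix.toEuclideanCLM (𝕜 := ℂ) A‖

/-- The word `v_{α,θ}^n = v_{α,θ}(1) … v_{α,θ}(n)`. -/
def sturmianWord (α θ : ℝ) (n : ℕ) : List ℝ :=
  (List.range n).map fun k => sturmian α θ (k + 1)

/-- The set of finite nonempty subwords of a two-sided sequence `v : ℤ → ℝ`. -/
def SubZ (v : ℤ → ℝ) : Set (List ℝ) :=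
  {w | w ≠ [] ∧ ∃ k : ℤ, w = (List.range w.length).map fun i => v (k + i)}

/-- The set of finite nonempty subwords of the one-sided word `c_α` (indexed from `1`). -/
def SubC (α : ℝ) : Set (List ℝ) :=
  {w | w ≠ [] ∧ ∃ k : ℕ, 1 ≤ k ∧ w = (List.range w.length).map fun i => cword α (k + i)}

/-- `W_α`, the set of all finite nonempty subwords of the sequences `v_{α,θ}`, `θ ∈ [0,1)`. -/
def Walpha (α : ℝ) : Set (List ℝ) :=
  {w | ∃ θ ∈ Set.Ico (0 : ℝ) 1, w ∈ SubZ (sturmian α θ)}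

/-- `α` is a bounded density number: `limsup_{n→∞} (1/n) ∑_{j=1}^n a_j < ∞` for the
continued fraction coefficients `a_j` of `α`. -/
def BoundedDensity (α : ℝ) : Prop :=
  Filter.IsBoundedUnder (· ≤ ·) Filter.atTop
    (fun n : ℕ => (1 / n : ℝ) * ∑ j ∈ Finset.Icc 1 n, (cfCoeff α j : ℝ))

end

namespace SturmAux

/-- scalar convergence lemma -/
lemma growth (m q : ℕ → ℝ) (a : ℕ → ℝ) (K c : ℝ) (hK : 0 ≤ K) (hq1 : ∀ n, 1 ≤ q n)
    (hmono : ∀ n, q n ≤ q (n + 1)) (ha : ∀ n, 1 ≤ a n)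
    (hrec : ∀ n, q (n + 2) = a n * q (n + 1) + q n)
    (hq : Filter.Tendsto q Filter.atTop Filter.atTop)
    (hm : ∀ n, m (n + 3) ≤ m (n + 1) + m n + K * (a (n + 1) + a n + 1))
    (hm0 : ∀ n, -c ≤ m n) :
    Filter.Tendsto (fun n => (1 / q n) * m n) Filter.atTop (nhds 0) := by
  have hlow : Filter.Tendsto (fun n => (1 / q n) * (-c)) Filter.atTop (nhds 0) := by
    have h1 : Filter.Tendsto (fun n => (q n)⁻¹) Filter.atTop (nhds 0) := hq.inv_tendsto_atTop
    simpa [one_div] using h1.mul_const (-c)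
  have hqpos : ∀ n, 0 < q n := fun n => lt_of_lt_of_le one_pos (hq1 n)
  have key : ∀ ε > 0, ∃ N : ℕ, ∃ C : ℝ, ∀ n ≥ N, m n ≤ (3 * ε + C * (9/10 : ℝ) ^ n) * q n := by
    intro ε hε
    have hev := hq.eventually_ge_atTop (3 * K / ε)
    obtain ⟨N, hN⟩ := Filter.eventually_atTop.1 hev
    have herr : ∀ n ≥ N, K * (a (n + 1) + a n + 1) ≤ ε * q (n + 3) := by
      intro n hn
      have h1 := hN (n + 1) (by omega)
      have h2 := hN (n + 2) (by omega)
      have h3 := hN (n + 3) (by omega)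
      rw [div_le_iff₀ hε] at h1 h2 h3
      have r1 := hrec n
      have r2 := hrec (n + 1)
      have e1 : 3 * K * a n ≤ ε * q (n + 3) := by
        have : 3 * K * a n ≤ q (n + 1) * ε * a n :=
          mul_le_mul_of_nonneg_right h1 (by linarith [ha n])
        have h4 : q (n + 1) * a n ≤ q (n + 3) := by
          have := hmono (n + 2); nlinarith [hqpos n]
        nlinarith
      have e2 : 3 * K * a (n + 1) ≤ ε * q (n + 3) := by
        have : 3 * K * a (n + 1) ≤ q (n + 2) * ε * a (n + 1) :=
          mul_le_mul_of_nonneg_right h2 (by linarith [ha (n + 1)])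
        have h4 : q (n + 2) * a (n + 1) ≤ q (n + 3) := by
          nlinarith [hqpos (n + 1)]
        nlinarith
      linarith
    set C : ℝ := (|m N| + |m (N + 1)| + |m (N + 2)|) / (9/10 : ℝ) ^ (N + 2) with hC
    have hpp : (0 : ℝ) < (9/10 : ℝ) ^ (N + 2) := by positivity
    have hC0 : 0 ≤ C := by positivity
    refine ⟨N, C, ?_⟩
    have hbase : ∀ n, n ≤ N + 2 → |m n| ≤ |m N| + |m (N + 1)| + |m (N + 2)| →
        m n ≤ (3 * ε + C * (9/10 : ℝ) ^ n) * q n := by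
      intro n hn hb
      have h1 : (9/10 : ℝ) ^ (N + 2) ≤ (9/10 : ℝ) ^ n :=
        pow_le_pow_of_le_one (by norm_num) (by norm_num) hn
      have h2 : C * (9/10 : ℝ) ^ (N + 2) = |m N| + |m (N + 1)| + |m (N + 2)| := by
        rw [hC]; field_simp
      have h3 := mul_le_mul_of_nonneg_left h1 hC0
      have h4 := le_abs_self (m n)
      have h5 : 0 ≤ C * (9/10 : ℝ) ^ n := by positivity
      nlinarith [hq1 n]
    have hall : ∀ k, m (N + k) ≤ (3 * ε + C * (9/10 : ℝ) ^ (N + k)) * q (N + k) ∧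
        m (N + k + 1) ≤ (3 * ε + C * (9/10 : ℝ) ^ (N + k + 1)) * q (N + k + 1) ∧
        m (N + k + 2) ≤ (3 * ε + C * (9/10 : ℝ) ^ (N + k + 2)) * q (N + k + 2) := by
      intro k
      induction k with
      | zero =>
        have p1 := abs_nonneg (m N)
        have p2 := abs_nonneg (m (N + 1))
        have p3 := abs_nonneg (m (N + 2))
        exact ⟨hbase N (by omega) (by linarith), hbase (N + 1) (by omega) (by linarith),
          hbase (N + 2) (by omega) (by linarith)⟩
      | succ k ih =>
        obtain ⟨i0, i1, i2⟩ := ih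
        refine ⟨i1, i2, ?_⟩
        have hr := hm (N + k)
        have he := herr (N + k) (by omega)
        set n := N + k
        have e3 : N + (k + 1) + 2 = n + 3 := by omega
        rw [e3]
        set t : ℝ := C * (9/10 : ℝ) ^ n with ht
        have ht0 : 0 ≤ t := by positivity
        have t1 : C * (9/10 : ℝ) ^ (n + 1) = t * (9/10) := by rw [ht]; ring
        have t3 : C * (9/10 : ℝ) ^ (n + 3) = t * (729/1000) := by rw [ht]; ring
        rw [t1] at i1
        rw [t3]
        have r1 := hrec n
        have r2 := hrec (n + 1)
        have l1 : q (n + 1) + q n ≤ q (n + 2) := by nlinarith [ha n, hqpos (n + 1)]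
        have l2 : q (n + 2) + q (n + 1) ≤ q (n + 3) := by nlinarith [ha (n + 1), hqpos (n + 2)]
        have l3 : q n + q (n + 1) ≤ 2 / 3 * q (n + 3) := by linarith [hmono n]
        have s1 : m (n + 1) ≤ (3 * ε + t) * q (n + 1) := by
          have := hqpos (n + 1)
          nlinarith [mul_nonneg ht0 this.le]
        have s2 : (3 * ε + t) * (q n + q (n + 1)) ≤ (3 * ε + t) * (2 / 3 * q (n + 3)) :=
          mul_le_mul_of_nonneg_left l3 (by positivity)
        have s3 := mul_nonneg ht0 (hqpos (n + 3)).le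
        nlinarith
    intro n hn
    obtain ⟨k, rfl⟩ := Nat.exists_eq_add_of_le hn
    exact (hall k).1
  rw [tendsto_order]
  constructor
  · intro b hb
    filter_upwards [(tendsto_order.1 hlow).1 b hb] with n hn
    refine lt_of_lt_of_le hn ?_
    exact mul_le_mul_of_nonneg_left (hm0 n) (by have := hqpos n; positivity)
  · intro b hb
    obtain ⟨N, C, h⟩ := key (b / 6) (by positivity)
    have hlim : Filter.Tendsto (fun n : ℕ => 3 * (b / 6) + C * (9/10 : ℝ) ^ n) Filter.atTop
        (nhds (3 * (b / 6) + C * 0)) :=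
      (((tendsto_pow_atTop_nhds_zero_of_lt_one (by norm_num) (by norm_num)).const_mul C).const_add _)
    have := (tendsto_order.1 hlim).2 b (by linarith)
    filter_upwards [this, Filter.eventually_ge_atTop N] with n hn hnN
    refine lt_of_le_of_lt ?_ hn
    rw [one_div, inv_mul_le_iff₀ (hqpos n), mul_comm]
    exact h n hnN

/-! ### trace recursion -/

abbrev Mat := Matrix (Fin 2) (Fin 2) ℝ

lemma cayley (A : Mat) (h : A.det = 1) : A * A = A.trace • A - 1 := by
  rw [Matrix.det_fin_two] at h
  ext i j
  fin_cases i <;> fin_cases j <;>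
    simp [Matrix.mul_apply, Fin.sum_univ_two, Matrix.trace_fin_two] <;> linarith

lemma pow_bound (A : Mat) (h : A.det = 1) (B : ℝ) (hB : |A.trace| ≤ B) (k : ℕ) :
    ∃ U V : ℝ, A ^ k = U • A - V • (1 : Mat) ∧ |U| ≤ (B + 1) ^ k ∧ |V| ≤ (B + 1) ^ k := by
  have hB0 : 0 ≤ B := (abs_nonneg _).trans hB
  induction k with
  | zero => exact ⟨0, -1, by simp, by simp, by simp⟩
  | succ k ih =>
    obtain ⟨U, V, h1, h2, h3⟩ := ih
    refine ⟨U * A.trace - V, U, ?_, ?_, ?_⟩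
    · rw [pow_succ, h1, sub_mul, smul_mul_assoc, cayley A h, smul_mul_assoc, one_mul, smul_sub,
        sub_smul, smul_smul]
      abel
    · have h4 : |U * A.trace - V| ≤ |U| * |A.trace| + |V| := by
        rw [← abs_mul]; exact abs_sub _ _
      have h5 : |U| * |A.trace| ≤ (B + 1) ^ k * B :=
        mul_le_mul h2 hB (abs_nonneg _) (by positivity)
      rw [pow_succ]; linarith
    · have : (B + 1) ^ k ≤ (B + 1) ^ (k + 1) := pow_le_pow_right₀ (by linarith) (by omega)
      linarith

section traces
variable (M : ℕ → Mat) (a : ℕ → ℕ)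

def yy (n p : ℕ) : ℝ := (M n * M (n + 1) ^ p).trace

def Esc (n p : ℕ) : Prop :=
  2 < |(M (n + 1)).trace| ∧ 2 < |yy M n (p + 1)| ∧ |yy M n p| < |yy M n (p + 1)|

variable {M a}

lemma yy_zero (n : ℕ) : yy M n 0 = (M n).trace := by simp [yy]

lemma yy_rec (hdet : ∀ n, (M n).det = 1) (n p : ℕ) :
    yy M n (p + 2) = (M (n + 1)).trace * yy M n (p + 1) - yy M n p := by
  unfold yy
  have : M n * M (n + 1) ^ (p + 2) = (M (n + 1)).trace • (M n * M (n + 1) ^ (p + 1))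
      - M n * M (n + 1) ^ p := by
    rw [pow_add, pow_two, cayley _ (hdet _), pow_succ, mul_sub, mul_sub]
    simp
  rw [this, Matrix.trace_sub, Matrix.trace_smul, smul_eq_mul]

lemma yy_a (hM : ∀ n, M (n + 2) = M n * M (n + 1) ^ a n) (n : ℕ) :
    yy M n (a n) = (M (n + 2)).trace := by
  unfold yy; rw [hM]

lemma yy_a_succ (hM : ∀ n, M (n + 2) = M n * M (n + 1) ^ a n) (n : ℕ) :
    yy M n (a n + 1) = yy M (n + 1) 1 := by
  unfold yy
  rw [pow_succ, ← mul_assoc, ← hM, pow_one, Matrix.trace_mul_comm]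

lemma esc_step (hdet : ∀ n, (M n).det = 1) {n p : ℕ} (h : Esc M n p) : Esc M n (p + 1) := by
  obtain ⟨h1, h2, h3⟩ := h
  have e := yy_rec hdet n p
  have : |yy M n (p + 1)| < |yy M n (p + 2)| := by
    rw [e]
    have h4 := abs_sub_abs_le_abs_sub ((M (n + 1)).trace * yy M n (p + 1)) (yy M n p)
    rw [abs_mul] at h4
    nlinarith [abs_nonneg (yy M n (p + 1))]
  exact ⟨h1, h2.trans this, this⟩

lemma esc_steps (hdet : ∀ n, (M n).det = 1) {n p : ℕ} (h : Esc M n p) (k : ℕ) :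
    Esc M n (p + k) := by
  induction k with
  | zero => exact h
  | succ k ih => exact esc_step hdet ih

lemma esc_next (hdet : ∀ n, (M n).det = 1) (hM : ∀ n, M (n + 2) = M n * M (n + 1) ^ a n)
    {n p : ℕ} (hp : p + 1 ≤ a n) (h : Esc M n p) : Esc M (n + 1) 0 := by
  obtain ⟨k, hk⟩ := Nat.exists_eq_add_of_le hp
  have h1 := esc_steps hdet h k
  have h2 := esc_step hdet h1
  have e0 : p + k + 1 = a n := by omega
  unfold Esc at h1 h2
  rw [e0] at h1 h2
  obtain ⟨g1, g2, g3⟩ := h1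
  obtain ⟨_, g4, g5⟩ := h2
  have e := yy_rec hdet n (p + k)
  have e1 : p + k + 2 = a n + 1 := by omega
  rw [e1, e0] at e
  have ea := yy_a hM n
  have es := yy_a_succ hM n
  refine ⟨by rw [← ea]; exact g2, by rw [zero_add, ← es]; exact g4, ?_⟩
  rw [zero_add, ← es, yy_zero, e]
  have h4 := abs_sub_abs_le_abs_sub ((M (n + 1)).trace * yy M n (a n)) (yy M n (p + k))
  rw [abs_mul] at h4
  nlinarith

lemma esc_forever (hdet : ∀ n, (M n).det = 1) (ha : ∀ n, 1 ≤ a n)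
    (hM : ∀ n, M (n + 2) = M n * M (n + 1) ^ a n)
    {n p : ℕ} (hp : p + 1 ≤ a n) (h : Esc M n p) (k : ℕ) : 2 < |(M (n + 1 + k)).trace| := by
  cases k with
  | zero => exact h.1
  | succ k =>
    have : Esc M (n + 1 + k) 0 := by
      induction k with
      | zero => exact esc_next hdet hM hp h
      | succ k ih => exact esc_next hdet hM (by have := ha (n + 1 + k); omega) ih
    exact this.1

lemma inv_p (hdet : ∀ n, (M n).det = 1) (n p : ℕ) :
    yy M n p ^ 2 + yy M n (p + 1) ^ 2 - (M (n + 1)).trace * yy M n p * yy M n (p + 1) =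
    yy M n 0 ^ 2 + yy M n 1 ^ 2 - (M (n + 1)).trace * yy M n 0 * yy M n 1 := by
  induction p with
  | zero => rfl
  | succ p ih => rw [← ih, yy_rec hdet]; ring

def Inv (M : ℕ → Mat) (n : ℕ) : ℝ :=
  (M n).trace ^ 2 + (M (n + 1)).trace ^ 2 + yy M n 1 ^ 2
    - (M n).trace * (M (n + 1)).trace * yy M n 1

lemma inv_const (hdet : ∀ n, (M n).det = 1) (hM : ∀ n, M (n + 2) = M n * M (n + 1) ^ a n)
    (n : ℕ) : Inv M n = Inv M 0 := by
  induction n with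
  | zero => rfl
  | succ n ih =>
    rw [← ih]
    have := inv_p hdet n (a n)
    rw [yy_a hM, yy_a_succ hM, yy_zero] at this
    unfold Inv
    linarith

lemma traces_bdd (hdet : ∀ n, (M n).det = 1)
    (hM : ∀ n, M (n + 2) = M n * M (n + 1) ^ a n) (ha : ∀ n, 1 ≤ a n)
    (hne : ∀ n p, p + 1 ≤ a n → ¬ Esc M n p) : ∃ B, ∀ n, |(M n).trace| ≤ B := by
  set B := |Inv M 0| + 5 + |(M 0).trace| + |(M 1).trace| with hB
  have b1 := abs_nonneg (Inv M 0)
  have b2 := abs_nonneg (M 0).trace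
  have b3 := abs_nonneg (M 1).trace
  refine ⟨B, ?_⟩
  have : ∀ n, |(M n).trace| ≤ B ∧ |(M (n + 1)).trace| ≤ B := by
    intro n
    induction n with
    | zero => exact ⟨by linarith, by simp only [zero_add]; linarith⟩
    | succ n ih =>
      refine ⟨ih.2, ?_⟩
      show |(M (n + 2)).trace| ≤ B
      by_cases h1 : |(M (n + 1)).trace| ≤ 2
      · by_cases h2 : |(M (n + 2)).trace| ≤ 2
        · linarith
        push Not at h2
        have h3 := hne (n + 1) 0 (ha _)
        have h4 : |yy M (n + 1) 1| ≤ 2 := by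
          by_contra h4
          push Not at h4
          exact h3 ⟨h2, h4, by rw [yy_zero]; simp only [zero_add]; linarith⟩
        have hI := inv_const hdet hM (n + 1)
        unfold Inv at hI
        have h5 : |(M (n + 1)).trace * (M (n + 1 + 1)).trace * yy M (n + 1) 1| ≤
            4 * |(M (n + 2)).trace| := by
          rw [abs_mul, abs_mul]
          have : |(M (n + 1)).trace| * |yy M (n + 1) 1| ≤ 2 * 2 :=
            mul_le_mul h1 h4 (abs_nonneg _) (by norm_num)
          show |(M (n + 1)).trace| * |(M (n + 2)).trace| * |yy M (n + 1) 1| ≤ _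
          nlinarith [abs_nonneg (M (n + 2)).trace]
        have h6 := le_abs_self ((M (n + 1)).trace * (M (n + 1 + 1)).trace * yy M (n + 1) 1)
        have h7 := le_abs_self (Inv M 0)
        have h8 : |(M (n + 2)).trace| ^ 2 = (M (n + 1 + 1)).trace ^ 2 := sq_abs _
        have h9 : |(M (n + 2)).trace| ^ 2 ≤ |Inv M 0| + 4 * |(M (n + 2)).trace| := by
          unfold Inv at h7 ⊢
          nlinarith [sq_nonneg (M (n + 1)).trace, sq_nonneg (yy M (n + 1) 1)]
        nlinarith
      · push Not at h1
        have : ∀ p, p ≤ a n → |yy M n p| ≤ B := by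
          intro p
          induction p with
          | zero => intro _; rw [yy_zero]; exact ih.1
          | succ p ihp =>
            intro hp
            have h3 := hne n p hp
            by_contra h4
            push Not at h4
            have h5 := ihp (by omega)
            exact h3 ⟨h1, by linarith, by linarith⟩
        rw [← yy_a hM]
        exact this _ le_rfl
  exact fun n => (this n).1

end traces
end SturmAux
namespace SturmAux

def rT (lam e x : ℝ) : Mat := !![e - lam * x, -1; 1, 0]

def rM (lam e : ℝ) : List ℝ → Mat
  | [] => 1
  | x :: w => rM lam e w * rT lam e x

lemma rM_append (lam e : ℝ) (w w' : List ℝ) : rM lam e (w ++ w') = rM lam e w' * rM lam e w := by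
  induction w with
  | nil => simp [rM]
  | cons x w ih => simp [rM, ih, mul_assoc]

lemma rM_flatten (lam e : ℝ) (w : List ℝ) (k : ℕ) :
    rM lam e (List.replicate k w).flatten = rM lam e w ^ k := by
  induction k with
  | zero => simp [rM]
  | succ k ih => rw [List.replicate_succ, List.flatten_cons, rM_append, ih, pow_succ]

lemma rM_det (lam e : ℝ) (w : List ℝ) : (rM lam e w).det = 1 := by
  induction w with
  | nil => simp [rM]
  | cons x w ih => simp [rM, ih, rT, Matrix.det_fin_two]

lemma rM_continuous (lam : ℝ) (w : List ℝ) : Continuous (fun e => rM lam e w) := by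
  induction w with
  | nil => exact continuous_const
  | cons x w ih =>
    have : Continuous (fun e => rT lam e x) := by
      refine continuous_matrix ?_
      intro i j
      fin_cases i <;> fin_cases j <;> simp [rT] <;> fun_prop
    simp only [rM]
    exact ih.matrix_mul this

lemma transferM_real (lam e : ℝ) (w : List ℝ) :
    transferM lam (e : ℂ) w = (rM lam e w).map (algebraMap ℝ ℂ) := by
  induction w with
  | nil => simp [rM, transferM]
  | cons x w ih =>
    have : transferT lam (e : ℂ) x = (rT lam e x).map (algebraMap ℝ ℂ) := by
      ext i j
      fin_cases i <;> fin_cases j <;> simp [rT, transferT]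
    rw [transferM, rM, ih, this, Matrix.map_mul]

/-- the norm of a real matrix -/
noncomputable def nn (A : Mat) : ℝ := opNorm (A.map (algebraMap ℝ ℂ))

lemma nn_nonneg (A : Mat) : 0 ≤ nn A := norm_nonneg _

lemma nn_mul (A B : Mat) : nn (A * B) ≤ nn A * nn B := by
  unfold nn opNorm
  rw [Matrix.map_mul, map_mul]
  exact norm_mul_le _ _

lemma nn_one : nn 1 = 1 := by
  unfold nn opNorm
  rw [Matrix.map_one _ (by simp) (by simp), map_one]
  exact norm_one

lemma nn_sub (A B : Mat) : nn (A - B) ≤ nn A + nn B := by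
  unfold nn opNorm
  rw [Matrix.map_sub _ (by simp), map_sub]
  exact norm_sub_le _ _

lemma nn_smul (c : ℝ) (A : Mat) : nn (c • A) = |c| * nn A := by
  unfold nn opNorm
  have : (c • A).map (algebraMap ℝ ℂ) = (c : ℂ) • A.map (algebraMap ℝ ℂ) := by
    ext i j; simp
  rw [this, map_smul, norm_smul]
  simp

lemma nn_entry (A : Mat) (i j : Fin 2) : |A i j| ≤ nn A := by
  unfold nn opNorm
  set f := Matrix.toEuclideanCLM (𝕜 := ℂ) (A.map (algebraMap ℝ ℂ))
  have h1 := f.le_opNorm (EuclideanSpace.single j (1 : ℂ))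
  rw [PiLp.norm_single, norm_one, mul_one] at h1
  have h2 := PiLp.norm_apply_le (f (EuclideanSpace.single j (1 : ℂ))) i
  have h3 : f (EuclideanSpace.single j (1 : ℂ)) i = (A i j : ℂ) := by
    simp [f, Matrix.ofLp_toEuclideanCLM, Matrix.mulVec_single]
  rw [h3] at h2
  simpa using h2.trans h1

lemma nn_E (i j : Fin 2) : nn (Matrix.single i j 1) ≤ 1 := by
  unfold nn opNorm
  refine ContinuousLinearMap.opNorm_le_bound _ zero_le_one ?_
  intro x
  rw [one_mul]
  have : Matrix.toEuclideanCLM (𝕜 := ℂ) ((Matrix.single i j (1:ℝ)).map (algebraMap ℝ ℂ)) x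
      = EuclideanSpace.single i (x j) := by
    ext k
    fin_cases i <;> fin_cases j <;> fin_cases k <;>
      simp [Matrix.ofLp_toEuclideanCLM, Matrix.single]
  rw [this, PiLp.norm_single]
  exact PiLp.norm_apply_le x j

lemma nn_adj (A : Mat) : nn A.adjugate ≤ 4 * nn A := by
  have : A.adjugate = A 1 1 • Matrix.single 0 0 1 - A 0 1 • Matrix.single 0 1 1 -
      (A 1 0 • Matrix.single 1 0 1 - A 0 0 • Matrix.single 1 1 1) := by
    rw [Matrix.adjugate_fin_two]
    ext i j
    fin_cases i <;> fin_cases j <;> simp [Matrix.single]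
  rw [this]
  have h : ∀ (k l i j : Fin 2), nn (A k l • Matrix.single i j (1:ℝ)) ≤ nn A := by
    intro k l i j
    rw [nn_smul]
    calc |A k l| * nn (Matrix.single i j 1) ≤ |A k l| * 1 :=
          mul_le_mul_of_nonneg_left (nn_E i j) (abs_nonneg _)
      _ ≤ nn A := by rw [mul_one]; exact nn_entry A k l
  have h1 := nn_sub (A 1 1 • Matrix.single 0 0 (1:ℝ) - A 0 1 • Matrix.single 0 1 1)
      (A 1 0 • Matrix.single 1 0 1 - A 0 0 • Matrix.single 1 1 1)
  have h2 := nn_sub (A 1 1 • Matrix.single 0 0 (1:ℝ)) (A 0 1 • Matrix.single 0 1 1)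
  have h3 := nn_sub (A 1 0 • Matrix.single 1 0 (1:ℝ)) (A 0 0 • Matrix.single 1 1 1)
  linarith [h 1 1 0 0, h 0 1 0 1, h 1 0 1 0, h 0 0 1 1]

lemma nn_lower (A : Mat) (h : A.det = 1) : 1 / 2 ≤ nn A := by
  have h1 : A * A.adjugate = 1 := by rw [Matrix.mul_adjugate, h, one_smul]
  have h2 := nn_mul A A.adjugate
  rw [h1, nn_one] at h2
  have h3 := nn_adj A
  have h4 := nn_nonneg A
  by_contra h5
  push Not at h5
  nlinarith

lemma nn_rec {M : ℕ → Mat} {a : ℕ → ℕ} (hdet : ∀ n, (M n).det = 1)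
    (hM : ∀ n, M (n + 2) = M n * M (n + 1) ^ a n) (ha : ∀ n, 1 ≤ a n)
    (B : ℝ) (hB : ∀ n, |(M n).trace| ≤ B) (n : ℕ) :
    nn (M (n + 3)) ≤ 14 * (B + 1) ^ (a (n + 1) + a n + 1) * (nn (M (n + 1)) * nn (M n)) := by
  have hB0 : 0 ≤ B := (abs_nonneg _).trans (hB 0)
  obtain ⟨b, hb⟩ : ∃ b, a n = b + 1 := ⟨a n - 1, by have := ha n; omega⟩
  set A := M n with hA
  set D := M (n + 1) with hD
  set F := M (n + 2) with hF
  have h1 : F = (A * D ^ b) * D := by rw [hF, hM, hb, pow_succ, mul_assoc]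
  set G := A * D ^ b with hG
  have hGdet : G.det = 1 := by rw [hG, Matrix.det_mul, Matrix.det_pow, hdet, hdet]; simp
  have h2 : G.adjugate * F = D := by
    rw [h1, ← mul_assoc, Matrix.adjugate_mul, hGdet, one_smul, one_mul]
  obtain ⟨U, V, e1, e2, e3⟩ := pow_bound F (hdet _) B (hB _) (a (n + 1) + 1)
  obtain ⟨U', V', f1, f2, f3⟩ := pow_bound D (hdet _) B (hB _) b
  have h3 : M (n + 3) = U • D - V • G.adjugate := by
    have : M (n + 3) = G.adjugate * F ^ (a (n + 1) + 1) := by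
      rw [pow_succ', ← mul_assoc, h2]; exact hM (n + 1)
    rw [this, e1, mul_sub, mul_smul_comm, h2, mul_smul_comm, mul_one]
  have nA := nn_lower A (hdet _)
  have nD := nn_lower D (hdet _)
  have g1 : nn (D ^ b) ≤ (B + 1) ^ b * (3 * nn D) := by
    rw [f1]
    refine (nn_sub _ _).trans ?_
    rw [nn_smul, nn_smul, nn_one]
    have := mul_le_mul_of_nonneg_right f2 (nn_nonneg D)
    have hp : 0 ≤ (B + 1) ^ b := by positivity
    nlinarith
  have g2 : nn G ≤ (B + 1) ^ b * (3 * (nn D * nn A)) := by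
    refine (nn_mul _ _).trans ?_
    have := mul_le_mul_of_nonneg_left g1 (nn_nonneg A)
    linarith
  have g3 := nn_adj G
  set P := (B + 1) ^ (a (n + 1) + 1) with hP
  set Q := (B + 1) ^ b with hQ
  have hP1 : 1 ≤ P := one_le_pow₀ (by linarith)
  have hQ1 : 1 ≤ Q := one_le_pow₀ (by linarith)
  have hPQ : P * Q ≤ (B + 1) ^ (a (n + 1) + a n + 1) := by
    rw [hP, hQ, ← pow_add]
    exact pow_le_pow_right₀ (by linarith) (by omega)
  have g4 : nn (M (n + 3)) ≤ P * nn D + P * nn G.adjugate := by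
    rw [h3]
    refine (nn_sub _ _).trans ?_
    rw [nn_smul, nn_smul]
    exact add_le_add (mul_le_mul_of_nonneg_right e2 (nn_nonneg _))
      (mul_le_mul_of_nonneg_right e3 (nn_nonneg _))
  have hX : 0 ≤ nn D * nn A := mul_nonneg (nn_nonneg _) (nn_nonneg _)
  have g5 : nn D ≤ 2 * (nn D * nn A) := by nlinarith
  have g6 : nn D ≤ Q * (2 * (nn D * nn A)) := by nlinarith
  have g7 : nn (M (n + 3)) ≤ 14 * (P * Q) * (nn D * nn A) := by
    have : nn D + nn G.adjugate ≤ Q * (14 * (nn D * nn A)) := by nlinarith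
    have := mul_le_mul_of_nonneg_left this (by linarith : 0 ≤ P)
    nlinarith
  refine g7.trans ?_
  have := mul_le_mul_of_nonneg_right hPQ hX
  nlinarith

/-- abstract conclusion: no escape implies subexponential growth. -/
lemma no_escape_growth {M : ℕ → Mat} {a : ℕ → ℕ} (q : ℕ → ℝ) (hdet : ∀ n, (M n).det = 1)
    (hM : ∀ n, M (n + 2) = M n * M (n + 1) ^ a n) (ha : ∀ n, 1 ≤ a n)
    (hne : ∀ n p, p + 1 ≤ a n → ¬ Esc M n p)
    (hq1 : ∀ n, 1 ≤ q n) (hmono : ∀ n, q n ≤ q (n + 1))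
    (hrec : ∀ n, q (n + 2) = a n * q (n + 1) + q n)
    (hq : Filter.Tendsto q Filter.atTop Filter.atTop) :
    Filter.Tendsto (fun n => (1 / q n) * Real.log (nn (M n))) Filter.atTop (nhds 0) := by
  obtain ⟨B, hB⟩ := traces_bdd hdet hM ha hne
  have hB0 : 0 ≤ B := (abs_nonneg _).trans (hB 0)
  have hlB : 0 ≤ Real.log (B + 1) := Real.log_nonneg (by linarith)
  have hl14 : 0 ≤ Real.log 14 := Real.log_nonneg (by norm_num)
  have hpos : ∀ n, 0 < nn (M n) := fun n => lt_of_lt_of_le (by norm_num) (nn_lower _ (hdet n))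
  refine growth (fun n => Real.log (nn (M n))) q (fun n => (a n : ℝ))
    (Real.log 14 + Real.log (B + 1)) (Real.log 2)
    (by positivity) hq1 hmono (fun n => by exact_mod_cast ha n) hrec hq ?_ ?_
  · intro n
    have h1 := Real.log_le_log (hpos _) (nn_rec hdet hM ha B hB n)
    have p1 := (hpos (n + 1)).ne'
    have p2 := (hpos n).ne'
    have p3 : (B + 1) ≠ 0 := by positivity
    rw [Real.log_mul (by positivity) (by positivity), Real.log_mul (by norm_num) (by positivity),
      Real.log_mul p1 p2, Real.log_pow] at h1
    push_cast at h1
    have : Real.log 14 ≤ Real.log 14 * ((a (n + 1) : ℝ) + a n + 1) := by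
      have : (0:ℝ) ≤ (a (n + 1) : ℝ) + a n := by positivity
      nlinarith
    nlinarith
  · intro n
    have h1 := Real.log_le_log (by norm_num) (nn_lower _ (hdet n))
    simpa [Real.log_inv] using h1

end SturmAux
namespace SturmAux

lemma gauss_props {α : ℝ} (hirr : Irrational α) (hα : α ∈ Set.Ioo (0 : ℝ) 1) (n : ℕ) :
    Irrational (cfGauss α n) ∧ 0 < cfGauss α n ∧ cfGauss α n < 1 := by
  induction n with
  | zero => exact ⟨hirr, hα.1, hα.2⟩
  | succ n ih =>
    have h1 : Irrational (cfGauss α (n + 1)) := by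
      show Irrational (Int.fract (cfGauss α n)⁻¹)
      unfold Int.fract
      exact (irrational_sub_intCast_iff).2 (irrational_inv_iff.2 ih.1)
    refine ⟨h1, ?_, Int.fract_lt_one _⟩
    exact lt_of_le_of_ne (Int.fract_nonneg _) (fun h => h1.ne_zero h.symm)

lemma coeff_eq {α : ℝ} (hirr : Irrational α) (hα : α ∈ Set.Ioo (0 : ℝ) 1) (n : ℕ) :
    (cfGauss α n)⁻¹ = cfCoeff α (n + 1) + cfGauss α (n + 1) := by
  have h := gauss_props hirr hα n
  have h0 : 0 ≤ (cfGauss α n)⁻¹ := (inv_pos.2 h.2.1).le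
  have : cfGauss α (n + 1) = Int.fract (cfGauss α n)⁻¹ := rfl
  rw [this]
  unfold cfCoeff
  rw [Nat.add_sub_cancel, natCast_floor_eq_intCast_floor h0]
  exact (Int.floor_add_fract _).symm

lemma coeff_pos {α : ℝ} (hirr : Irrational α) (hα : α ∈ Set.Ioo (0 : ℝ) 1) (n : ℕ) :
    1 ≤ cfCoeff α (n + 1) := by
  have h := gauss_props hirr hα n
  unfold cfCoeff
  rw [Nat.add_sub_cancel]
  refine Nat.le_floor ?_
  rw [Nat.cast_one]
  exact (one_le_inv₀ h.2.1).2 h.2.2.le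

/-- lengths of words -/
def QQ (a : ℕ → ℕ) (m : ℕ) : ℕ := (sWord a (m + 1)).length

def PP (a : ℕ → ℕ) : ℕ → ℕ
  | 0 => 0
  | 1 => 1
  | m + 2 => a (m + 2) * PP a (m + 1) + PP a m

lemma QQ_zero (a : ℕ → ℕ) : QQ a 0 = 1 := rfl
lemma QQ_one (a : ℕ → ℕ) (h : 1 ≤ a 1) : QQ a 1 = a 1 := by
  simp [QQ, sWord]; omega
lemma QQ_rec (a : ℕ → ℕ) (m : ℕ) : QQ a (m + 2) = a (m + 2) * QQ a (m + 1) + QQ a m := by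
  simp [QQ, sWord]

lemma QQ_pos (a : ℕ → ℕ) (m : ℕ) : 1 ≤ QQ a m := by
  induction m using Nat.strong_induction_on with
  | _ m ih =>
    match m with
    | 0 => simp [QQ_zero]
    | 1 => simp [QQ, sWord]
    | m + 2 => rw [QQ_rec]; have := ih m (by omega); omega

variable {α : ℝ}

noncomputable def dd (α : ℝ) : ℕ → ℝ
  | 0 => α
  | m + 1 => cfGauss α (m + 1) * dd α m

lemma dd_pos (hirr : Irrational α) (hα : α ∈ Set.Ioo (0 : ℝ) 1) (m : ℕ) : 0 < dd α m := by
  induction m with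
  | zero => exact hα.1
  | succ m ih => exact mul_pos (gauss_props hirr hα _).2.1 ih

lemma dd_eq (hirr : Irrational α) (hα : α ∈ Set.Ioo (0 : ℝ) 1) (m : ℕ) :
    (QQ (cfCoeff α) m * α - PP (cfCoeff α) m = (-1) ^ m * dd α m) ∧
    (QQ (cfCoeff α) (m + 1) * α - PP (cfCoeff α) (m + 1) = (-1) ^ (m + 1) * dd α (m + 1)) := by
  induction m with
  | zero =>
    constructor
    · simp [QQ_zero, PP, dd]
    · have h := coeff_eq hirr hα 0
      have h1 : cfGauss α 0 = α := rfl
      rw [h1] at h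
      have hne : α ≠ 0 := hα.1.ne'
      have h : α * (cfCoeff α (0 + 1) + cfGauss α (0 + 1)) = 1 := by
        rw [← h, mul_inv_cancel₀ hne]
      simp only [zero_add] at h
      rw [zero_add, QQ_one _ (coeff_pos hirr hα 0)]
      simp [PP, dd]
      linarith
  | succ m ih =>
    refine ⟨ih.2, ?_⟩
    have h := coeff_eq hirr hα (m + 1)
    have hg := (gauss_props hirr hα (m + 1)).2.1
    show (QQ (cfCoeff α) (m + 2) : ℝ) * α - PP (cfCoeff α) (m + 2) = (-1) ^ (m + 2) * dd α (m + 2)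
    rw [QQ_rec, PP]
    have e1 : dd α (m + 2) = cfGauss α (m + 2) * (cfGauss α (m + 1) * dd α m) := rfl
    have e2 : dd α (m + 1) = cfGauss α (m + 1) * dd α m := rfl
    have e3 : cfGauss α (m + 1) * (cfCoeff α (m + 2) + cfGauss α (m + 2)) = 1 := by
      show cfGauss α (m + 1) * (cfCoeff α (m + 1 + 1) + cfGauss α (m + 1 + 1)) = 1
      rw [← h, mul_inv_cancel₀ hg.ne']
    push_cast
    have i1 := ih.1
    have i2 := ih.2
    rw [e2] at i2
    rw [e1]
    rw [pow_succ] at i2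
    rw [pow_add]
    linear_combination i1 + cfCoeff α (m + 2) * i2 - ((-1) ^ m * dd α m) * e3

lemma det_eq (a : ℕ → ℕ) (m : ℕ) :
    (QQ a m : ℤ) * PP a (m + 1) - PP a m * QQ a (m + 1) = (-1) ^ m := by
  induction m with
  | zero => simp [QQ_zero, PP]
  | succ m ih =>
    have e1 := QQ_rec a m
    have e2 : PP a (m + 2) = a (m + 2) * PP a (m + 1) + PP a m := rfl
    show (QQ a (m + 1) : ℤ) * PP a (m + 2) - PP a (m + 1) * QQ a (m + 2) = _
    rw [e1, e2, pow_succ]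
    push_cast
    linear_combination -ih

lemma core (hirr : Irrational α) (hα : α ∈ Set.Ioo (0 : ℝ) 1) (m : ℕ) (j N : ℤ) (hj : 1 ≤ j)
    (hj2 : j < QQ (cfCoeff α) (m + 1)) (h1 : -dd α m ≤ (-1) ^ m * (j * α - N))
    (h2 : (-1) ^ m * (j * α - N) ≤ 0) : False := by
  set Q : ℤ := ((QQ (cfCoeff α) m : ℕ) : ℤ) with hQ
  set Q' : ℤ := ((QQ (cfCoeff α) (m + 1) : ℕ) : ℤ) with hQ'
  set P : ℤ := ((PP (cfCoeff α) m : ℕ) : ℤ) with hP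
  set P' : ℤ := ((PP (cfCoeff α) (m + 1) : ℕ) : ℤ) with hP'
  have hdet : Q * P' - P * Q' = (-1) ^ m := det_eq _ m
  have hs : ((-1 : ℤ) ^ m) * (-1) ^ m = 1 := by rw [← mul_pow]; simp
  have hsR : ((-1 : ℝ) ^ m) * (-1) ^ m = 1 := by rw [← mul_pow]; simp
  obtain ⟨d1, d2⟩ := dd_eq hirr hα m
  have c1 : (Q : ℝ) = QQ (cfCoeff α) m := by rw [hQ]; simp
  have c2 : (Q' : ℝ) = QQ (cfCoeff α) (m + 1) := by rw [hQ']; simp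
  have c3 : (P : ℝ) = PP (cfCoeff α) m := by rw [hP]; simp
  have c4 : (P' : ℝ) = PP (cfCoeff α) (m + 1) := by rw [hP']; simp
  rw [← c1, ← c3] at d1
  rw [← c2, ← c4] at d2
  have hQ0 : 1 ≤ Q := by rw [hQ]; exact_mod_cast QQ_pos _ m
  have hQ0' : 1 ≤ Q' := by rw [hQ']; exact_mod_cast QQ_pos _ (m + 1)
  have hd := dd_pos hirr hα m
  have hd' := dd_pos hirr hα (m + 1)
  obtain ⟨x, hx⟩ : ∃ x : ℤ, x = (-1) ^ m * (j * P' - N * Q') := ⟨_, rfl⟩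
  obtain ⟨y, hy⟩ : ∃ y : ℤ, y = (-1) ^ m * (N * Q - j * P) := ⟨_, rfl⟩
  have e1 : x * Q + y * Q' = j := by
    rw [hx, hy]; linear_combination ((-1 : ℤ) ^ m * j) * hdet + j * hs
  have e2 : x * P + y * P' = N := by
    rw [hx, hy]; linear_combination ((-1 : ℤ) ^ m * N) * hdet + N * hs
  have e3 : (-1) ^ m * ((j : ℝ) * α - N) = x * dd α m - y * dd α (m + 1) := by
    rw [← e1, ← e2]
    push_cast
    rw [pow_succ] at d2
    linear_combination ((-1 : ℝ) ^ m * x) * d1 + ((-1 : ℝ) ^ m * y) * d2 +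
      (x * dd α m - y * dd α (m + 1)) * hsR
  rw [e3] at h1 h2
  by_cases hy0 : y ≤ 0
  · have hx1 : 1 ≤ x := by
      by_contra hx1
      have : x ≤ 0 := by omega
      nlinarith
    have r1 : (1 : ℝ) ≤ x := by exact_mod_cast hx1
    have r2 : (y : ℝ) ≤ 0 := by exact_mod_cast hy0
    nlinarith
  · have hy1 : 1 ≤ y := by omega
    have hx1 : x ≤ -1 := by
      by_contra hx1
      have : 0 ≤ x := by omega
      nlinarith
    have r1 : (x : ℝ) ≤ -1 := by exact_mod_cast hx1
    have r2 : (1 : ℝ) ≤ y := by exact_mod_cast hy1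
    nlinarith

lemma crossing (hirr : Irrational α) (hα : α ∈ Set.Ioo (0 : ℝ) 1) (m : ℕ) (j : ℤ) (hj : 1 ≤ j)
    (hj2 : j < QQ (cfCoeff α) (m + 1)) :
    ⌊((j : ℝ) + QQ (cfCoeff α) m) * α⌋ = ⌊(j : ℝ) * α⌋ + PP (cfCoeff α) m := by
  have hd := dd_pos hirr hα m
  have d1 := (dd_eq hirr hα m).1
  have f1 := Int.floor_le ((j : ℝ) * α)
  have f2 := Int.lt_floor_add_one ((j : ℝ) * α)
  have hd1 : dd α m < 1 := by
    induction m with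
    | zero => exact hα.2
    | succ m ih =>
      have hg := gauss_props hirr hα (m + 1)
      have : dd α m < 1 := by
        clear ih hd d1 hj2
        induction m with
        | zero => exact hα.2
        | succ m ih2 =>
          have hg := gauss_props hirr hα (m + 1)
          have := ih2 hg
          have := dd_pos hirr hα m
          show cfGauss α (m + 1) * dd α m < 1
          nlinarith
      have := dd_pos hirr hα m
      show cfGauss α (m + 1) * dd α m < 1
      nlinarith
  rw [Int.floor_eq_iff]
  push_cast
  rcases Nat.even_or_odd m with hm | hm
  · have hs : (-1 : ℝ) ^ m = 1 := hm.neg_one_pow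
    rw [hs, one_mul] at d1
    constructor
    · nlinarith
    · by_contra hcon
      push Not at hcon
      refine core hirr hα m j (⌊(j : ℝ) * α⌋ + 1) hj hj2 ?_ ?_
      · rw [hs]; push_cast; linarith
      · rw [hs]; push_cast; linarith
  · have hs : (-1 : ℝ) ^ m = -1 := hm.neg_one_pow
    rw [hs] at d1
    constructor
    · by_contra hcon
      push Not at hcon
      refine core hirr hα m j (⌊(j : ℝ) * α⌋) hj hj2 ?_ ?_
      · rw [hs]; linarith
      · rw [hs]; linarith
    · linarith

lemma sturmian_eq (hα : α ∈ Set.Ioo (0 : ℝ) 1) (θ : ℝ) (n : ℤ) :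
    sturmian α θ n = ((⌊((n : ℝ) + 1) * α + θ⌋ - ⌊(n : ℝ) * α + θ⌋ : ℤ) : ℝ) := by
  unfold sturmian
  have f1 := Int.fract_nonneg ((n : ℝ) * α + θ)
  have f2 := Int.fract_lt_one ((n : ℝ) * α + θ)
  have f3 := Int.floor_add_fract ((n : ℝ) * α + θ)
  obtain ⟨h0, h1⟩ := hα
  split_ifs with h
  · have : ⌊((n : ℝ) + 1) * α + θ⌋ = ⌊(n : ℝ) * α + θ⌋ + 1 := by
      rw [Int.floor_eq_iff]; push_cast
      constructor <;> linarith [h.1]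
    rw [this]; simp
  · have h' : Int.fract ((n : ℝ) * α + θ) < 1 - α := by
      by_contra h2
      push Not at h2
      exact h ⟨h2, f2⟩
    have : ⌊((n : ℝ) + 1) * α + θ⌋ = ⌊(n : ℝ) * α + θ⌋ := by
      rw [Int.floor_eq_iff]
      constructor <;> linarith
    rw [this]; simp

lemma per (hirr : Irrational α) (hα : α ∈ Set.Ioo (0 : ℝ) 1) (m : ℕ) (j : ℤ) (hj : 1 ≤ j)
    (hj2 : j + 1 < QQ (cfCoeff α) (m + 1)) :
    sturmian α 0 (j + QQ (cfCoeff α) m) = sturmian α 0 j := by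
  rw [sturmian_eq hα, sturmian_eq hα]
  have c1 := crossing hirr hα m j hj (by omega)
  have c2 := crossing hirr hα m (j + 1) (by omega) hj2
  push_cast at c2 ⊢
  simp only [add_zero]
  rw [c1, show (j : ℝ) + QQ (cfCoeff α) m + 1 = j + 1 + QQ (cfCoeff α) m by ring, c2]
  push_cast
  ring

noncomputable def pf (α : ℝ) (N : ℕ) : List ℝ :=
  (List.range N).map fun i : ℕ => sturmian α 0 ((i : ℤ) + 1)

lemma pf_add (hirr : Irrational α) (hα : α ∈ Set.Ioo (0 : ℝ) 1) (m N : ℕ)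
    (h2 : 2 ≤ QQ (cfCoeff α) m) (hN : QQ (cfCoeff α) m + N ≤ QQ (cfCoeff α) (m + 1)) :
    pf α (QQ (cfCoeff α) m + N) = pf α (QQ (cfCoeff α) m) ++ pf α N := by
  unfold pf
  rw [List.range_add, List.map_append, List.map_map]
  congr 1
  refine List.map_congr_left ?_
  intro i hi
  rw [List.mem_range] at hi
  simp only [Function.comp]
  rw [← per hirr hα m ((i : ℤ) + 1) (by omega) (by omega)]
  congr 1
  push_cast
  ring

lemma pf_mul (hirr : Irrational α) (hα : α ∈ Set.Ioo (0 : ℝ) 1) (m N k : ℕ)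
    (h2 : 2 ≤ QQ (cfCoeff α) m) (hN : k * QQ (cfCoeff α) m + N ≤ QQ (cfCoeff α) (m + 1)) :
    pf α (k * QQ (cfCoeff α) m + N) =
      (List.replicate k (pf α (QQ (cfCoeff α) m))).flatten ++ pf α N := by
  induction k with
  | zero => simp
  | succ k ih =>
    have e : (k + 1) * QQ (cfCoeff α) m + N =
      QQ (cfCoeff α) m + (k * QQ (cfCoeff α) m + N) := by ring
    rw [e] at hN ⊢
    rw [pf_add hirr hα m _ h2 hN, ih (by omega), List.replicate_succ, List.flatten_cons,
      List.append_assoc]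

lemma prefix_step (hirr : Irrational α) (hα : α ∈ Set.Ioo (0 : ℝ) 1) (m : ℕ)
    (h2 : 2 ≤ QQ (cfCoeff α) (m + 1))
    (i0 : sWord (cfCoeff α) (m + 1) = pf α (QQ (cfCoeff α) m))
    (i1 : sWord (cfCoeff α) (m + 2) = pf α (QQ (cfCoeff α) (m + 1))) :
    sWord (cfCoeff α) (m + 3) = pf α (QQ (cfCoeff α) (m + 2)) := by
  have := pf_mul hirr hα (m + 1) (QQ (cfCoeff α) m) (cfCoeff α (m + 2)) h2 (by rw [← QQ_rec])
  rw [QQ_rec, this, ← i0, ← i1, sWord]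

lemma prefix_one (hirr : Irrational α) (hα : α ∈ Set.Ioo (0 : ℝ) 1) :
    sWord (cfCoeff α) 2 = pf α (QQ (cfCoeff α) 1) := by
  have ha := coeff_pos hirr hα 0
  rw [zero_add] at ha
  have d := (dd_eq hirr hα 0).2
  have hd := dd_pos hirr hα 1
  have hdl : dd α 1 < α := by
    have := (gauss_props hirr hα 1).2.2
    show cfGauss α 1 * α < α
    nlinarith [hα.1]
  rw [zero_add] at d
  have hP : PP (cfCoeff α) 1 = 1 := rfl
  rw [QQ_one _ ha, hP] at d
  rw [QQ_one _ ha]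
  obtain ⟨b, hb⟩ : ∃ b, cfCoeff α 1 = b + 1 := ⟨cfCoeff α 1 - 1, by omega⟩
  rw [sWord, hb]
  rw [hb] at d
  push_cast at d
  unfold pf
  rw [List.range_succ, List.map_append, Nat.add_sub_cancel]
  obtain ⟨h0, h1⟩ := hα
  congr 1
  · symm
    rw [List.eq_replicate_iff]
    refine ⟨by simp, ?_⟩
    intro x hx
    rw [List.mem_map] at hx
    obtain ⟨i, hi, rfl⟩ := hx
    rw [List.mem_range] at hi
    rw [sturmian_eq ⟨h0, h1⟩]
    have hi' : (i : ℝ) + 1 ≤ b := by exact_mod_cast hi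
    have hi0 : (0 : ℝ) ≤ i := by positivity
    have e1 : ⌊(((((i : ℤ) + 1 : ℤ)) : ℝ) + 1) * α + 0⌋ = 0 := by
      rw [Int.floor_eq_iff]; push_cast
      constructor
      · positivity
      · nlinarith
    have e2 : ⌊(((((i : ℤ) + 1 : ℤ)) : ℝ)) * α + 0⌋ = 0 := by
      rw [Int.floor_eq_iff]; push_cast
      constructor
      · positivity
      · nlinarith
    rw [e1, e2]; simp
  · simp only [List.map_cons, List.map_nil]
    rw [sturmian_eq ⟨h0, h1⟩]
    have e1 : ⌊(((((b : ℤ) + 1 : ℤ)) : ℝ) + 1) * α + 0⌋ = 1 := by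
      rw [Int.floor_eq_iff]; push_cast
      constructor <;> linarith
    have e2 : ⌊(((((b : ℤ) + 1 : ℤ)) : ℝ)) * α + 0⌋ = 0 := by
      rw [Int.floor_eq_iff]; push_cast
      constructor
      · positivity
      · linarith
    rw [e1, e2]; simp

lemma prefix_two (hirr : Irrational α) (hα : α ∈ Set.Ioo (0 : ℝ) 1) :
    sWord (cfCoeff α) 3 = pf α (QQ (cfCoeff α) 2) := by
  have ha := coeff_pos hirr hα 0
  rw [zero_add] at ha
  have ha2 := coeff_pos hirr hα 1
  have d := (dd_eq hirr hα 0).2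
  have d2 := (dd_eq hirr hα 1).2
  have hd := dd_pos hirr hα 1
  have hd2 := dd_pos hirr hα 2
  have hdl : dd α 2 < dd α 1 := by
    have := (gauss_props hirr hα 2).2.2
    show cfGauss α 2 * dd α 1 < dd α 1
    nlinarith
  rw [zero_add] at d
  have hP : PP (cfCoeff α) 1 = 1 := rfl
  have hP2 : PP (cfCoeff α) 2 = cfCoeff α 2 * 1 + 0 := rfl
  have hQ1 := QQ_one _ ha
  have hQ2 : QQ (cfCoeff α) 2 = cfCoeff α 2 * QQ (cfCoeff α) 1 + 1 := QQ_rec _ 0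
  obtain ⟨h0, h1⟩ := hα
  by_cases h2 : 2 ≤ cfCoeff α 1
  · refine prefix_step hirr ⟨h0, h1⟩ 0 (by rw [zero_add, hQ1]; exact h2) ?_ (prefix_one hirr ⟨h0, h1⟩)
    show [0] = pf α 1
    rw [hQ1, hP] at d
    have h2' : (2 : ℝ) ≤ cfCoeff α 1 := by exact_mod_cast h2
    have e1 : ⌊(1 + 1 : ℝ) * α⌋ = 0 := by
      rw [Int.floor_eq_iff]; push_cast
      constructor
      · positivity
      · push_cast at d; nlinarith
    have e2 : ⌊α⌋ = 0 := by
      rw [Int.floor_eq_iff]; push_cast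
      constructor <;> linarith
    simp [pf, sturmian_eq ⟨h0, h1⟩, e1, e2]
  · have h21 : cfCoeff α 1 = 1 := by omega
    have ht : sWord (cfCoeff α) 2 = [1] := by simp [sWord, h21]
    have hone := prefix_one hirr ⟨h0, h1⟩
    rw [ht, hQ1, h21] at hone
    have hv1 : sturmian α 0 1 = 1 := by
      simp [pf] at hone
      exact hone.symm
    rw [hQ1, h21, mul_one] at hQ2
    rw [hQ2]
    rw [show (1 + 1 : ℕ) = 2 from rfl, hQ2, hP2] at d2
    rw [hQ1, h21, hP] at d
    push_cast at d d2
    unfold pf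
    rw [List.range_succ, List.map_append]
    show (List.replicate (cfCoeff α 2) (sWord (cfCoeff α) 2)).flatten ++ [0] = _
    rw [ht]
    congr 1
    · symm
      have : (List.replicate (cfCoeff α 2) [(1 : ℝ)]).flatten = List.replicate (cfCoeff α 2) 1 := by
        rw [List.flatten_replicate_singleton]
      rw [this, List.eq_replicate_iff]
      refine ⟨by simp, ?_⟩
      intro x hx
      rw [List.mem_map] at hx
      obtain ⟨i, hi, rfl⟩ := hx
      rw [List.mem_range] at hi
      induction i with
      | zero => simpa using hv1
      | succ i ih =>
        rw [← ih (by omega)]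
        have hp := per hirr ⟨h0, h1⟩ 1 ((i : ℤ) + 1) (by omega)
          (by rw [show (1 + 1 : ℕ) = 2 from rfl, hQ2]; push_cast; omega)
        rw [← hp, hQ1, h21]
        push_cast
        rfl
    · simp only [List.map_cons, List.map_nil]
      rw [sturmian_eq ⟨h0, h1⟩]
      have e1 : ⌊(((((cfCoeff α 2 : ℤ) + 1 : ℤ)) : ℝ) + 1) * α + 0⌋ = cfCoeff α 2 := by
        rw [Int.floor_eq_iff]; push_cast
        constructor <;> linarith
      have e2 : ⌊(((((cfCoeff α 2 : ℤ) + 1 : ℤ)) : ℝ)) * α + 0⌋ = cfCoeff α 2 := by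
        rw [Int.floor_eq_iff]; push_cast
        constructor <;> linarith
      rw [e1, e2]; simp

lemma QQ_lt (hirr : Irrational α) (hα : α ∈ Set.Ioo (0 : ℝ) 1) (m : ℕ) :
    QQ (cfCoeff α) (m + 1) < QQ (cfCoeff α) (m + 2) := by
  rw [QQ_rec]
  have h1 := coeff_pos hirr hα (m + 1)
  have h2 := QQ_pos (cfCoeff α) m
  have : QQ (cfCoeff α) (m + 1) ≤ cfCoeff α (m + 2) * QQ (cfCoeff α) (m + 1) :=
    Nat.le_mul_of_pos_left _ h1
  omega

lemma QQ_ge (hirr : Irrational α) (hα : α ∈ Set.Ioo (0 : ℝ) 1) (m : ℕ) :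
    m ≤ QQ (cfCoeff α) m := by
  have : ∀ m, m + 1 ≤ QQ (cfCoeff α) (m + 1) := by
    intro m
    induction m with
    | zero => exact QQ_pos _ _
    | succ m ih => have := QQ_lt hirr hα m; show m + 1 + 1 ≤ QQ (cfCoeff α) (m + 2); omega
  cases m with
  | zero => omega
  | succ m => exact this m

lemma prefix_all (hirr : Irrational α) (hα : α ∈ Set.Ioo (0 : ℝ) 1) (m : ℕ) :
    sWord (cfCoeff α) (m + 2) = pf α (QQ (cfCoeff α) (m + 1)) := by
  have : sWord (cfCoeff α) (m + 2) = pf α (QQ (cfCoeff α) (m + 1)) ∧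
      sWord (cfCoeff α) (m + 3) = pf α (QQ (cfCoeff α) (m + 2)) := by
    induction m with
    | zero => exact ⟨prefix_one hirr hα, prefix_two hirr hα⟩
    | succ m ih =>
      refine ⟨ih.2, prefix_step hirr hα (m + 1) ?_ ih.1 ih.2⟩
      have := QQ_ge hirr hα (m + 1 + 1)
      omega
  exact this.1

end SturmAux
namespace SturmAux

lemma exists_shift {α : ℝ} (hirr : Irrational α) (θ δ : ℝ) (hδ : 0 < δ) (R : ℕ) :
    ∃ p : ℕ, R < p ∧ ∃ k : ℤ, ∃ t : ℝ, 0 ≤ t ∧ t < δ ∧ (p : ℝ) * α = θ + t + k := by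
  have hfact : Fact ((0 : ℝ) < 1) := ⟨one_pos⟩
  have hd : DenseRange (· • (α : AddCircle (1 : ℝ)) : ℤ → AddCircle (1 : ℝ)) :=
    AddCircle.denseRange_zsmul_coe_iff.2 (by simpa using hirr)
  have hcl : MapClusterPt ((θ + δ / 2 : ℝ) : AddCircle (1 : ℝ)) Filter.atTop
      (· • (α : AddCircle (1 : ℝ)) : ℕ → AddCircle (1 : ℝ)) := by
    rw [mapClusterPt_atTop_nsmul_iff_mem_topologicalClosure_zmultiples]
    have := hd ((θ + δ / 2 : ℝ) : AddCircle (1 : ℝ))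
    exact this
  set U : Set (AddCircle (1 : ℝ)) := (fun x : ℝ => (x : AddCircle (1 : ℝ))) '' Set.Ioo θ (θ + δ)
  have hU : IsOpen U := QuotientAddGroup.isOpenMap_coe _ isOpen_Ioo
  have hmem : ((θ + δ / 2 : ℝ) : AddCircle (1 : ℝ)) ∈ U :=
    ⟨θ + δ / 2, ⟨by linarith, by linarith⟩, rfl⟩
  have hfr := hcl.frequently (hU.mem_nhds hmem)
  obtain ⟨p, hp, hpU⟩ := (Filter.frequently_atTop.1 hfr) (R + 1)
  obtain ⟨x, hx, hxe⟩ := hpU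
  replace hxe : (x : AddCircle (1 : ℝ)) = p • (α : AddCircle (1 : ℝ)) := hxe
  refine ⟨p, by omega, ?_⟩
  have h1 : ((p * α - x : ℝ) : AddCircle (1 : ℝ)) = 0 := by
    rw [AddCircle.coe_sub, sub_eq_zero, hxe, ← nsmul_eq_mul]
    exact AddCircle.coe_nsmul (1:ℝ)
  rw [AddCircle.coe_eq_zero_iff] at h1
  obtain ⟨k, hk⟩ := h1
  refine ⟨k, x - θ, by linarith [hx.1], by linarith [hx.2], ?_⟩
  simp at hk
  linarith

lemma window {α : ℝ} (hirr : Irrational α) (hα : α ∈ Set.Ioo (0 : ℝ) 1) (θ : ℝ) (R : ℕ) :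
    ∃ p : ℕ, R < p ∧ ∀ n : ℤ, |n| ≤ R → sturmian α 0 (n + p) = sturmian α θ n := by
  have hδ : ∃ δ > 0, ∀ n ∈ Finset.Icc (-(R : ℤ)) (R + 1),
      (n : ℝ) * α + θ + δ ≤ ⌊(n : ℝ) * α + θ⌋ + 1 := by
    have hne : (Finset.Icc (-(R : ℤ)) (R + 1)).Nonempty := ⟨0, by simp; omega⟩
    obtain ⟨n0, hn0, hmin⟩ := Finset.exists_min_image (Finset.Icc (-(R : ℤ)) (R + 1))
      (fun n => 1 - Int.fract ((n : ℝ) * α + θ)) hne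
    refine ⟨1 - Int.fract ((n0 : ℝ) * α + θ), by linarith [Int.fract_lt_one ((n0 : ℝ) * α + θ)], ?_⟩
    intro n hn
    have := hmin n hn
    have := Int.floor_add_fract ((n : ℝ) * α + θ)
    linarith
  obtain ⟨δ, hδ0, hδ⟩ := hδ
  obtain ⟨p, hp, k, t, ht0, ht1, hpt⟩ := exists_shift hirr θ δ hδ0 R
  refine ⟨p, hp, ?_⟩
  have hfl : ∀ n ∈ Finset.Icc (-(R : ℤ)) (R + 1),
      ⌊((n : ℝ) + p) * α⌋ = ⌊(n : ℝ) * α + θ⌋ + k := by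
    intro n hn
    have h1 := hδ n hn
    have h2 := Int.floor_le ((n : ℝ) * α + θ)
    rw [Int.floor_eq_iff]
    push_cast
    constructor <;> nlinarith
  intro n hn
  rw [abs_le] at hn
  have e1 := hfl n (by simp; omega)
  have e2 := hfl (n + 1) (by simp; omega)
  rw [sturmian_eq hα, sturmian_eq hα]
  push_cast at e2 ⊢
  simp only [add_zero]
  rw [show (n : ℝ) + p + 1 = n + 1 + p by ring, e1, e2]
  push_cast
  ring

end SturmAux
namespace SturmAux

lemma symm_approx {V : Type*} [NormedAddCommGroup V] [InnerProductSpace ℂ V]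
    [FiniteDimensional ℂ V] (T : V →ₗ[ℂ] V) (hT : T.IsSymmetric) (e ε : ℝ) (hε : 0 < ε) (u : V)
    (hu : ‖T u - (e : ℂ) • u‖ < ε * ‖u‖) :
    ∃ μ : ℝ, |μ - e| < ε ∧ ∃ ψ : V, ψ ≠ 0 ∧ T ψ = (μ : ℂ) • ψ := by
  set b := hT.eigenvectorBasis rfl with hb
  by_contra hcon
  have hall : ∀ i, ε ≤ |hT.eigenvalues rfl i - e| := by
    intro i
    by_contra hi
    push Not at hi
    refine hcon ⟨hT.eigenvalues rfl i, hi, b i, b.toBasis.ne_zero i ∘ by simp, ?_⟩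
    exact hT.apply_eigenvectorBasis rfl i
  have h1 : ‖T u - (e : ℂ) • u‖ ^ 2 = ∑ i, ‖b.repr (T u - (e : ℂ) • u) i‖ ^ 2 := by
    rw [← EuclideanSpace.norm_sq_eq, LinearIsometryEquiv.norm_map]
  have h2 : ‖u‖ ^ 2 = ∑ i, ‖b.repr u i‖ ^ 2 := by
    rw [← EuclideanSpace.norm_sq_eq, LinearIsometryEquiv.norm_map]
  have h3 : ∀ i, ε ^ 2 * ‖b.repr u i‖ ^ 2 ≤ ‖b.repr (T u - (e : ℂ) • u) i‖ ^ 2 := by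
    intro i
    have : b.repr (T u - (e : ℂ) • u) i = ((hT.eigenvalues rfl i - e : ℝ) : ℂ) * b.repr u i := by
      rw [map_sub, map_smul]
      have := hT.eigenvectorBasis_apply_self_apply rfl u i
      simp only [PiLp.sub_apply, PiLp.smul_apply, smul_eq_mul]
      rw [hb, this]
      push_cast
      simp
      ring
    rw [this, norm_mul, mul_pow, Complex.norm_real, Real.norm_eq_abs]
    refine mul_le_mul_of_nonneg_right ?_ (by positivity)
    exact pow_le_pow_left₀ hε.le (hall i) 2
  have h4 : ε ^ 2 * ‖u‖ ^ 2 ≤ ‖T u - (e : ℂ) • u‖ ^ 2 := by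
    rw [h1, h2, Finset.mul_sum]
    exact Finset.sum_le_sum fun i _ => h3 i
  rw [← mul_pow] at h4
  have h5 : ε * ‖u‖ ≤ ‖T u - (e : ℂ) • u‖ := le_of_sq_le_sq h4 (norm_nonneg _)
  linarith

lemma trace_two (lam μ : ℝ) (q : ℕ) [NeZero q] (g : ℕ → ℝ) (φ : ZMod q → ℂ) (hφ : φ ≠ 0)
    (h : ∀ c, φ (c + 1) + φ (c - 1) + ((lam * g c.val : ℝ) : ℂ) * φ c = (μ : ℂ) * φ c) :
    (rM lam μ ((List.range q).map g)).trace = 2 := by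
  have key : ∀ n ≤ q, ((rM lam μ ((List.range n).map g)).map (algebraMap ℝ ℂ)).mulVec
      ![φ 0, φ (0 - 1)] = ![φ (n : ZMod q), φ ((n : ZMod q) - 1)] := by
    intro n
    induction n with
    | zero =>
      intro _
      simp [rM]
    | succ n ih =>
      intro hn
      rw [List.range_succ, List.map_append, rM_append, Matrix.map_mul, ← Matrix.mulVec_mulVec,
        ih (by omega)]
      have hv : ((n : ZMod q)).val = n := ZMod.val_natCast_of_lt (by omega)
      have := h (n : ZMod q)
      rw [hv] at this
      ext i
      fin_cases i
      · simp [rM, rT, Matrix.mulVec, dotProduct, Fin.sum_univ_two]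
        push_cast at this
        linear_combination -this
      · simp [rM, rT, Matrix.mulVec, dotProduct, Fin.sum_univ_two]
  have h0 : (![φ 0, φ (0 - 1)] : Fin 2 → ℂ) ≠ 0 := by
    intro h0
    apply hφ
    ext c
    have := key c.val (ZMod.val_lt c).le
    rw [h0, Matrix.mulVec_zero] at this
    have := congrFun this 0
    simpa using this.symm
  have hq := key q le_rfl
  rw [ZMod.natCast_self] at hq
  set A := rM lam μ ((List.range q).map g) with hA
  have hdet : (A.map (algebraMap ℝ ℂ) - 1).det = 0 := by
    rw [← Matrix.exists_mulVec_eq_zero_iff]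
    exact ⟨_, h0, by rw [Matrix.sub_mulVec, hq, Matrix.one_mulVec, sub_self]⟩
  have hd := rM_det lam μ ((List.range q).map g)
  rw [← hA, Matrix.det_fin_two] at hd
  have : (((A 0 0 - 1) * (A 1 1 - 1) - A 0 1 * A 1 0 : ℝ) : ℂ) = 0 := by
    rw [← hdet, Matrix.det_fin_two]
    simp
  have : (A 0 0 - 1) * (A 1 1 - 1) - A 0 1 * A 1 0 = 0 := by exact_mod_cast this
  rw [Matrix.trace_fin_two]
  linarith

/-- The cyclic operator. -/
noncomputable def cycOp (lam : ℝ) (q : ℕ) [NeZero q] (g : ℕ → ℝ) :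
    EuclideanSpace ℂ (ZMod q) →ₗ[ℂ] EuclideanSpace ℂ (ZMod q) where
  toFun φ := WithLp.toLp 2 fun c =>
    φ (c + 1) + φ (c - 1) + ((lam * g c.val : ℝ) : ℂ) * φ c
  map_add' φ ψ := by ext c; simp; ring
  map_smul' r φ := by ext c; simp; ring

lemma cycOp_symm (lam : ℝ) (q : ℕ) [NeZero q] (g : ℕ → ℝ) : (cycOp lam q g).IsSymmetric := by
  intro φ ψ
  simp only [PiLp.inner_apply, cycOp, LinearMap.coe_mk, AddHom.coe_mk, inner_add_left,
    inner_add_right, Finset.sum_add_distrib]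
  have e1 : ∑ c, inner ℂ (φ (c + 1)) (ψ c) = ∑ c, inner ℂ (φ c) (ψ (c - 1)) := by
    rw [← Equiv.sum_comp (Equiv.addRight (1 : ZMod q)) (fun c => inner ℂ (φ c) (ψ (c - 1)))]
    simp
  have e2 : ∑ c, inner ℂ (φ (c - 1)) (ψ c) = ∑ c, inner ℂ (φ c) (ψ (c + 1)) := by
    rw [← Equiv.sum_comp (Equiv.addRight (1 : ZMod q)) (fun c => inner ℂ (φ (c - 1)) (ψ c))]
    simp
  rw [e1, e2]
  have e3 : ∀ c, inner ℂ (((lam * g c.val : ℝ) : ℂ) * φ c) (ψ c) =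
      inner ℂ (φ c) (((lam * g c.val : ℝ) : ℂ) * ψ c) := by
    intro c
    simp
    ring
  simp only [e3]
  ring

lemma cyc_eigen (lam e ε : ℝ) (hε : 0 < ε) (q : ℕ) [NeZero q] (g : ℕ → ℝ) (φ : ZMod q → ℂ)
    (h : ∑ c, ‖φ (c + 1) + φ (c - 1) + ((lam * g c.val : ℝ) : ℂ) * φ c - (e : ℂ) * φ c‖ ^ 2
      < ε ^ 2 * ∑ c, ‖φ c‖ ^ 2) :
    ∃ μ : ℝ, |μ - e| < ε ∧ (rM lam μ ((List.range q).map g)).trace = 2 := by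
  set u : EuclideanSpace ℂ (ZMod q) := WithLp.toLp 2 φ with hu
  have h1 : ‖cycOp lam q g u - (e : ℂ) • u‖ < ε * ‖u‖ := by
    refine lt_of_pow_lt_pow_left₀ 2 (by positivity) ?_
    rw [mul_pow, EuclideanSpace.norm_sq_eq, EuclideanSpace.norm_sq_eq]
    simpa [cycOp, hu] using h
  obtain ⟨μ, hμ, ψ, hψ, hT⟩ := symm_approx _ (cycOp_symm lam q g) e ε hε u h1
  refine ⟨μ, hμ, trace_two lam μ q g ψ.ofLp ?_ ?_⟩
  · intro h0
    apply hψ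
    ext c
    simp [h0]
  · intro c
    have := congrArg (fun v : EuclideanSpace ℂ (ZMod q) => v c) hT
    simpa [cycOp] using this

end SturmAux
namespace SturmAux

noncomputable abbrev L2 := lp (fun _ : ℤ => ℂ) 2

lemma sq_summable (u : L2) : Summable fun n : ℤ => ‖u n‖ ^ 2 := by
  have := (lp.memℓp u).summable (by norm_num)
  simpa using this

lemma norm_sq_tsum (u : L2) : ‖u‖ ^ 2 = ∑' n : ℤ, ‖u n‖ ^ 2 := by
  have := lp.norm_rpow_eq_tsum (p := 2) (by norm_num) u
  simpa using this

lemma inner_summable (u w : L2) (f g : ℤ → ℤ) (hf : Function.Injective f)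
    (hg : Function.Injective g) : Summable fun n : ℤ => inner ℂ (u (f n)) (w (g n)) := by
  have h1 := (sq_summable u).comp_injective hf
  have h2 := (sq_summable w).comp_injective hg
  refine Summable.of_norm_bounded (h1.add h2) ?_
  intro n
  refine (norm_inner_le_norm _ _).trans ?_
  simp only [Function.comp]
  nlinarith [sq_nonneg (‖u (f n)‖ - ‖w (g n)‖), norm_nonneg (u (f n)), norm_nonneg (w (g n))]

lemma H_symm (v : ℤ → ℝ) (H : L2 →L[ℂ] L2)
    (hH : ∀ u : L2, ∀ n : ℤ, H u n = u (n + 1) + u (n - 1) + (v n : ℝ) * u n) (u w : L2) :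
    inner ℂ (H u) w = inner ℂ u (H w) := by
  have i1 : Function.Injective (fun n : ℤ => n + 1) := add_left_injective 1
  have i2 : Function.Injective (fun n : ℤ => n - 1) := sub_left_injective
  have i0 : Function.Injective (fun n : ℤ => n) := fun _ _ h => h
  have s1 := inner_summable u w _ _ i1 i0
  have s2 := inner_summable u w _ _ i2 i0
  have t1 := inner_summable u w _ _ i0 i1
  have t2 := inner_summable u w _ _ i0 i2
  have hL := lp.hasSum_inner (𝕜 := ℂ) (H u) w
  have hR := lp.hasSum_inner (𝕜 := ℂ) u (H w)
  have e1 : HasSum (fun n : ℤ => inner ℂ (u n) (w (n - 1)))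
      (∑' n : ℤ, inner ℂ (u (n + 1)) (w n)) := by
    rw [← (Equiv.addRight (1 : ℤ)).hasSum_iff]
    simpa [Function.comp_def] using s1.hasSum
  have e2 : HasSum (fun n : ℤ => inner ℂ (u n) (w (n + 1)))
      (∑' n : ℤ, inner ℂ (u (n - 1)) (w n)) := by
    rw [← (Equiv.subRight (1 : ℤ)).hasSum_iff]
    simpa [Function.comp_def] using s2.hasSum
  have d1 := (hL.sub s1.hasSum).sub s2.hasSum
  have d2 := (hR.sub e1).sub e2
  have : (fun n : ℤ => inner ℂ (H u n) (w n) - inner ℂ (u (n + 1)) (w n) - inner ℂ (u (n - 1)) (w n))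
      = fun n : ℤ => inner ℂ (u n) (H w n) - inner ℂ (u n) (w (n - 1)) - inner ℂ (u n) (w (n + 1)) := by
    ext n
    rw [hH, hH]
    simp
    ring
  rw [this] at d1
  have := d1.unique d2
  linear_combination this

lemma approx_fin (v : ℤ → ℝ) (H : L2 →L[ℂ] L2)
    (hH : ∀ u : L2, ∀ n : ℤ, H u n = u (n + 1) + u (n - 1) + (v n : ℝ) * u n)
    (E : ℂ) (hE : E ∈ spectrum ℂ H) :
    E = (E.re : ℂ) ∧ ∀ ε > 0, ∃ (u : L2) (s : Finset ℤ), (∀ n, n ∉ s → u n = 0) ∧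
      ‖H u - E • u‖ < ε * ‖u‖ := by
  have hsa : IsSelfAdjoint H := by
    rw [ContinuousLinearMap.isSelfAdjoint_iff_isSymmetric]
    exact fun u w => H_symm v H hH u w
  have hre : E = (E.re : ℂ) := hsa.mem_spectrum_eq_re hE
  refine ⟨hre, ?_⟩
  intro ε hε
  have h1 : ∃ u : L2, ‖H u - E • u‖ < ε * ‖u‖ := by
    by_contra hcon
    push Not at hcon
    rw [spectrum.mem_iff] at hE
    apply hE
    set A : L2 →L[ℂ] L2 := algebraMap ℂ _ E - H with hA
    have hAu : ∀ u, A u = E • u - H u := by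
      intro u
      rw [hA, ContinuousLinearMap.sub_apply, Algebra.algebraMap_eq_smul_one]
      rfl
    have hsym : ∀ u w : L2, inner ℂ (A u) w = inner ℂ u (A w) := by
      intro u w
      rw [hAu, hAu, inner_sub_left, inner_sub_right, H_symm v H hH, inner_smul_left,
        inner_smul_right]
      congr 2
      rw [hre]
      exact Complex.conj_ofReal _
    have hu2 : IsUnit (A * A) := by
      refine ContinuousLinearMap.isUnit_of_forall_le_norm_inner_map (𝕜 := ℂ) (A * A)
        (c := ⟨ε ^ 2, by positivity⟩) (by
          show (0 : ℝ) < ε ^ 2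
          positivity) ?_
      intro x
      have e1 : inner ℂ ((A * A) x) x = inner ℂ (A x) (A x) := by
        rw [← hsym]; rfl
      rw [e1, inner_self_eq_norm_sq_to_K]
      have e2 : ε * ‖x‖ ≤ ‖A x‖ := by
        rw [hAu, norm_sub_rev]; exact hcon x
      have e3 : (ε * ‖x‖) ^ 2 ≤ ‖A x‖ ^ 2 := pow_le_pow_left₀ (by positivity) e2 2
      show ‖x‖ ^ 2 * ε ^ 2 ≤ _
      rw [norm_pow]
      simp
      linarith
    exact (Commute.isUnit_mul_iff (Commute.refl A)).1 hu2 |>.1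
  obtain ⟨u, hu⟩ := h1
  have hs := lp.hasSum_single (p := 2) (by norm_num) u
  have hc : Continuous fun w : L2 => ε * ‖w‖ - ‖H w - E • w‖ := by fun_prop
  have ht := (hc.tendsto u).comp hs
  have hev := (tendsto_order.1 ht).1 0 (by linarith)
  obtain ⟨s, hs'⟩ := hev.exists
  refine ⟨∑ i ∈ s, lp.single 2 i (u i), s, ?_, by simpa using hs'⟩
  intro n hn
  rw [lp.coeFn_sum, Finset.sum_apply]
  refine Finset.sum_eq_zero ?_
  intro i hi
  exact lp.single_apply_ne _ _ _ (by rintro rfl; exact hn hi)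

lemma near_two (lam : ℝ) {α : ℝ} (hirr : Irrational α) (hα : α ∈ Set.Ioo (0 : ℝ) 1) (θ : ℝ)
    (H : L2 →L[ℂ] L2)
    (hH : ∀ u : L2, ∀ n : ℤ,
      H u n = u (n + 1) + u (n - 1) + (lam * sturmian α θ n : ℝ) * u n)
    (e : ℝ) (hE : (e : ℂ) ∈ spectrum ℂ H) (ε : ℝ) (hε : 0 < ε) :
    ∃ m0 : ℕ, ∀ m ≥ m0, ∃ μ : ℝ, |μ - e| < ε ∧
      (rM lam μ (sWord (cfCoeff α) (m + 1))).trace = 2 := by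
  obtain ⟨u, s, hs, hu⟩ := (approx_fin (fun n => lam * sturmian α θ n) H hH _ hE).2 ε hε
  obtain ⟨R, hR⟩ : ∃ R : ℕ, ∀ n ∈ s, |n| ≤ R := by
    refine ⟨∑ n ∈ s, n.natAbs, ?_⟩
    intro n hn
    have := Finset.single_le_sum (f := fun n : ℤ => n.natAbs) (fun _ _ => Nat.zero_le _) hn
    rw [Int.abs_eq_natAbs]; exact_mod_cast this
  obtain ⟨p, hp, hw⟩ := window hirr hα θ (R + 1)
  have hsupp : ∀ n : ℤ, (n < -R ∨ (R : ℤ) < n) → u n = 0 := by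
    intro n hn
    refine hs n fun hmem => ?_
    have := hR n hmem
    rw [abs_le] at this
    omega
  refine ⟨p + R + 3, ?_⟩
  intro m hm
  obtain ⟨m, rfl⟩ : ∃ k, m = k + 1 := ⟨m - 1, by omega⟩
  have hq := QQ_ge hirr hα (m + 1)
  rw [show m + 1 + 1 = m + 2 from rfl, prefix_all hirr hα m]
  unfold pf
  set q := QQ (cfCoeff α) (m + 1) with hqdef
  haveI : NeZero q := ⟨by omega⟩
  refine cyc_eigen lam e ε hε q _ (fun c : ZMod q => u ((c.val : ℤ) + 1 - p)) ?_
  set ι : ZMod q → ℤ := fun c => (c.val : ℤ) + 1 - p with hι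
  have hinj : Function.Injective ι := by
    intro c d hcd
    simp only [hι] at hcd
    exact ZMod.val_injective q (by omega)
  have e1 : ∑ c : ZMod q, ‖u (ι c)‖ ^ 2 = ‖u‖ ^ 2 := by
    rw [norm_sq_tsum, ← Finset.sum_image (s := Finset.univ) (g := ι) (f := fun n => ‖u n‖ ^ 2)
      (fun _ _ _ _ h => hinj h)]
    symm
    refine tsum_eq_sum ?_
    intro n hn
    have : u n = 0 := by
      by_contra hne
      have h1 : ¬ (n < -R ∨ (R : ℤ) < n) := fun h => hne (hsupp n h)
      push Not at h1
      apply hn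
      rw [Finset.mem_image]
      refine ⟨((n + p - 1).toNat : ZMod q), Finset.mem_univ _, ?_⟩
      simp only [hι]
      rw [ZMod.val_natCast_of_lt (by omega)]
      omega
    simp [this]
  have e2 : ∀ c : ZMod q, u (ι (c + 1)) + u (ι (c - 1)) +
      ((lam * sturmian α 0 ((c.val : ℤ) + 1) : ℝ) : ℂ) * u (ι c) - (e : ℂ) * u (ι c) =
      (H u - (e : ℂ) • u) (ι c) := by
    intro c
    have hc := ZMod.val_lt c
    have a1 : u (ι (c + 1)) = u (ι c + 1) := by
      by_cases h : c.val + 1 < q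
      · have : (c + 1).val = c.val + 1 := by
          have : c + 1 = ((c.val + 1 : ℕ) : ZMod q) := by simp
          rw [this, ZMod.val_natCast_of_lt h]
        have hidx : ι (c + 1) = ι c + 1 := by
          simp only [hι, this]; push_cast; ring
        rw [hidx]
      · have : c + 1 = 0 := by
          have h2 : c + 1 = ((c.val + 1 : ℕ) : ZMod q) := by simp
          rw [h2, show c.val + 1 = q by omega, ZMod.natCast_self]
        rw [this]
        rw [hsupp (ι 0) (by left; simp only [hι, ZMod.val_zero]; push_cast; omega),
          hsupp (ι c + 1) (by right; simp only [hι]; omega)]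
    have a2 : u (ι (c - 1)) = u (ι c - 1) := by
      by_cases h : 1 ≤ c.val
      · have : (c - 1).val = c.val - 1 := by
          have : c - 1 = ((c.val - 1 : ℕ) : ZMod q) := by
            rw [Nat.cast_sub h]; simp
          rw [this, ZMod.val_natCast_of_lt (by omega)]
        have hidx : ι (c - 1) = ι c - 1 := by
          simp only [hι, this]; omega
        rw [hidx]
      · have : c - 1 = ((q - 1 : ℕ) : ZMod q) := by
          have h2 : c = 0 := by
            rw [← ZMod.val_eq_zero]; omega
          rw [Nat.cast_sub (by omega), ZMod.natCast_self, h2]; simp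
        have hv : (c - 1).val = q - 1 := by
          rw [this, ZMod.val_natCast_of_lt (by omega)]
        rw [hsupp (ι (c - 1)) (by right; simp only [hι, hv]; omega),
          hsupp (ι c - 1) (by left; simp only [hι]; omega)]
    have a3 : ((lam * sturmian α 0 ((c.val : ℤ) + 1) : ℝ) : ℂ) * u (ι c) =
        ((lam * sturmian α θ (ι c) : ℝ) : ℂ) * u (ι c) := by
      by_cases h : |ι c| ≤ ((R + 1 : ℕ) : ℤ)
      · have hidx : (c.val : ℤ) + 1 = ι c + p := by
          simp only [hι]; ring
        rw [hidx, hw (ι c) h]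
      · rw [abs_le] at h
        rw [hsupp (ι c) (by push_cast at h; omega)]
        simp
    rw [a1, a2, a3]
    rw [lp.coeFn_sub, Pi.sub_apply, hH]
    rfl
  have e3 : ∑ c : ZMod q, ‖(H u - (e : ℂ) • u) (ι c)‖ ^ 2 ≤ ‖H u - (e : ℂ) • u‖ ^ 2 := by
    rw [norm_sq_tsum, ← Finset.sum_image (s := Finset.univ) (g := ι)
      (f := fun n => ‖(H u - (e : ℂ) • u) n‖ ^ 2) (fun _ _ _ _ h => hinj h)]
    exact (sq_summable _).sum_le_tsum _ (fun _ _ => by positivity)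
  have e4 : ‖H u - (e : ℂ) • u‖ ^ 2 < (ε * ‖u‖) ^ 2 :=
    pow_lt_pow_left₀ hu (norm_nonneg _) two_ne_zero
  calc _ = ∑ c : ZMod q, ‖(H u - (e : ℂ) • u) (ι c)‖ ^ 2 :=
        Finset.sum_congr rfl fun c _ => by rw [← e2 c]
    _ < (ε * ‖u‖) ^ 2 := lt_of_le_of_lt e3 e4
    _ = _ := by rw [mul_pow, ← e1]

end SturmAux
theorem lyapunov_zero_along_sWords
    (lam : ℝ) (hlam : lam ≠ 0) (α : ℝ) (hirr : Irrational α) (hα : α ∈ Set.Ioo (0 : ℝ) 1)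
    (θ' : ℝ) (hθ' : θ' ∈ Set.Ico (0 : ℝ) 1)
    (H : lp (fun _ : ℤ => ℂ) 2 →L[ℂ] lp (fun _ : ℤ => ℂ) 2)
    (hH : (∀ u : lp (fun _ : ℤ => ℂ) 2, ∀ n : ℤ,
      H u n = u (n + 1) + u (n - 1) + (lam * sturmian α θ' n : ℝ) * u n))
    (E : ℂ) (hE : E ∈ spectrum ℂ H) :
    Filter.Tendsto
      (fun n : ℕ => (1 / (sWord (cfCoeff α) (n + 1)).length : ℝ) *
        Real.log (opNorm (transferM lam E (sWord (cfCoeff α) (n + 1)))))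
      Filter.atTop (nhds 0) := by
  obtain ⟨hre, -⟩ := SturmAux.approx_fin (fun n => lam * sturmian α θ' n) H hH E hE
  obtain ⟨e, rfl⟩ : ∃ e : ℝ, E = (e : ℂ) := ⟨E.re, hre⟩
  have hMx : ∀ x : ℝ, ∀ n, SturmAux.rM lam x (sWord (cfCoeff α) (n + 2 + 1)) =
      SturmAux.rM lam x (sWord (cfCoeff α) (n + 1)) *
      SturmAux.rM lam x (sWord (cfCoeff α) (n + 1 + 1)) ^ cfCoeff α (n + 2) := by
    intro x n
    show SturmAux.rM lam x (sWord (cfCoeff α) (n + 3)) = _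
    rw [sWord, SturmAux.rM_append, SturmAux.rM_flatten]
  have ha : ∀ n, 1 ≤ cfCoeff α (n + 2) := fun n => SturmAux.coeff_pos hirr hα (n + 1)
  have hmain := SturmAux.no_escape_growth
    (M := fun n => SturmAux.rM lam e (sWord (cfCoeff α) (n + 1))) (a := fun n => cfCoeff α (n + 2))
    (fun n => (SturmAux.QQ (cfCoeff α) n : ℝ)) (fun n => SturmAux.rM_det _ _ _) (hMx e) ha ?_
    (fun n => by exact_mod_cast SturmAux.QQ_pos _ n) ?_ ?_ ?_
  · refine hmain.congr fun n => ?_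
    rw [SturmAux.transferM_real]
    rfl
  · intro n p hp hesc
    have hcM : ∀ k, Continuous fun x : ℝ => SturmAux.rM lam x (sWord (cfCoeff α) (k + 1)) :=
      fun k => SturmAux.rM_continuous lam _
    have hcy : ∀ k, Continuous fun x : ℝ =>
        SturmAux.yy (fun n => SturmAux.rM lam x (sWord (cfCoeff α) (n + 1))) n k := by
      intro k
      unfold SturmAux.yy
      exact ((hcM n).matrix_mul ((hcM (n + 1)).pow k)).matrix_trace
    have hopen : IsOpen {x : ℝ |
        SturmAux.Esc (fun n => SturmAux.rM lam x (sWord (cfCoeff α) (n + 1))) n p} := by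
      unfold SturmAux.Esc
      exact (isOpen_lt continuous_const (hcM (n + 1)).matrix_trace.abs).inter
        ((isOpen_lt continuous_const (hcy (p + 1)).abs).inter
          (isOpen_lt (hcy p).abs (hcy (p + 1)).abs))
    obtain ⟨ε, hε, hball⟩ := Metric.isOpen_iff.1 hopen e hesc
    obtain ⟨m0, hm0⟩ := SturmAux.near_two lam hirr hα θ' H hH e hE ε hε
    obtain ⟨μ, hμ, htr⟩ := hm0 (n + 1 + m0) (by omega)
    have hescμ := hball (show μ ∈ Metric.ball e ε by rw [Metric.mem_ball, Real.dist_eq]; exact hμ)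
    have := SturmAux.esc_forever
      (M := fun n => SturmAux.rM lam μ (sWord (cfCoeff α) (n + 1)))
      (a := fun n => cfCoeff α (n + 2)) (fun n => SturmAux.rM_det _ _ _) ha (hMx μ) hp hescμ m0
    rw [htr] at this
    norm_num at this
  · intro n
    have : SturmAux.QQ (cfCoeff α) n ≤ SturmAux.QQ (cfCoeff α) (n + 1) := by
      cases n with
      | zero => rw [SturmAux.QQ_zero]; exact SturmAux.QQ_pos _ _
      | succ n => exact (SturmAux.QQ_lt hirr hα n).le
    exact_mod_cast this
  · intro n
    simp only [SturmAux.QQ_rec]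
    push_cast
    ring
  · refine Filter.tendsto_atTop_mono (fun n => ?_) tendsto_natCast_atTop_atTop
    exact_mod_cast SturmAux.QQ_ge hirr hα n
end

section
/- For every n ≥ 2 there exists a palindrome π_n over {0,1} such that s_n = π_n·10 if n is even and s_n = π_n·01 if n is odd. -/
open scoped Classical

/-- Invariant satisfied by consecutive standard words. -/
def PalInv (x y : List ℝ) (u v : ℝ) : Prop :=
  ∃ r : List ℝ, r.reverse = r ∧ r ++ x.reverse = x ++ r ∧ r ++ y.reverse = y ++ r ∧
    x ++ y = r ++ [u, v] ∧ y ++ x = r ++ [v, u]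

theorem PalInv.swap {x y : List ℝ} {u v : ℝ} (h : PalInv x y u v) : PalInv y x v u := by
  obtain ⟨r, h1, h2, h3, h4, h5⟩ := h
  exact ⟨r, h1, h3, h2, h5, h4⟩

theorem PalInv.step {x y : List ℝ} {u v : ℝ} (h : PalInv x y u v) : PalInv x (x ++ y) u v := by
  obtain ⟨r, h1, h2, h3, h4, h5⟩ := h
  refine ⟨x ++ r, ?_, ?_, ?_, ?_, ?_⟩
  · rw [List.reverse_append, h1, h2]
  · rw [List.append_assoc, h2]
  · rw [List.reverse_append, List.append_assoc, ← List.append_assoc r, h3, List.append_assoc y,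
      h2]
    simp only [List.append_assoc]
  · rw [h4, List.append_assoc]
  · rw [List.append_assoc, h5, List.append_assoc]

theorem PalInv.iter {x y : List ℝ} {u v : ℝ} (h : PalInv x y u v) (k : ℕ) :
    PalInv x ((List.replicate k x).flatten ++ y) u v := by
  induction k with
  | zero => simpa using h
  | succ k ih =>
    have := ih.step
    simpa [List.replicate_succ] using this

theorem flatten_replicate_singleton_zero (k : ℕ) :
    (List.replicate k [(0 : ℝ)]).flatten = List.replicate k 0 := by
  induction k with
  | zero => rfl
  | succ k ih => simp [List.replicate_succ]

theorem palInv_sWord (a : ℕ → ℕ) (m : ℕ) :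
    (Even m → PalInv (sWord a (m + 1)) (sWord a m) 0 1) ∧
    (Odd m → PalInv (sWord a (m + 1)) (sWord a m) 1 0) := by
  have h0 : PalInv [0] [1] 0 1 := ⟨[], by simp⟩
  induction m with
  | zero => exact ⟨fun _ => by simpa [sWord] using h0, fun h => by simp at h⟩
  | succ m ih =>
    have key : ∀ u v, PalInv (sWord a (m + 1)) (sWord a m) u v →
        PalInv (sWord a (m + 2)) (sWord a (m + 1)) v u := by
      intro u v h
      cases m with
      | zero =>
        have := (h.iter (a 1 - 1)).swap
        simpa only [sWord, flatten_replicate_singleton_zero, Nat.zero_add] using this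
      | succ m =>
        have := (h.iter (a (m + 2))).swap
        simpa only [sWord] using this
    constructor
    · intro h
      exact key _ _ (ih.2 (by grind))
    · intro h
      exact key _ _ (ih.1 (by grind))

theorem cfGauss_irrational_mem (α : ℝ) (hirr : Irrational α) (hα : α ∈ Set.Ioo (0 : ℝ) 1)
    (n : ℕ) : Irrational (cfGauss α n) ∧ cfGauss α n ∈ Set.Ioo (0 : ℝ) 1 := by
  induction n with
  | zero => exact ⟨hirr, hα⟩
  | succ n ih =>
    have h : Irrational (cfGauss α (n + 1)) := by
      simp only [cfGauss, Int.fract]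
      exact (irrational_inv_iff.2 ih.1).sub_intCast _
    refine ⟨h, ?_, ?_⟩
    · exact lt_of_le_of_ne (Int.fract_nonneg _) (Ne.symm h.ne_zero)
    · exact Int.fract_lt_one _

theorem cfCoeff_pos (α : ℝ) (hirr : Irrational α) (hα : α ∈ Set.Ioo (0 : ℝ) 1)
    (n : ℕ) : 1 ≤ cfCoeff α n := by
  obtain ⟨-, h1, h2⟩ := cfGauss_irrational_mem α hirr hα (n - 1)
  unfold cfCoeff
  rw [Nat.one_le_floor_iff]
  exact (one_le_inv₀ h1).2 h2.le

theorem sWord_eq_palindrome_append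
    (α : ℝ) (hirr : Irrational α) (hα : α ∈ Set.Ioo (0 : ℝ) 1)
    (n : ℕ) (hn : 2 ≤ n) :
    ∃ π : List ℝ, π.reverse = π ∧
      (Even n → sWord (cfCoeff α) (n + 1) = π ++ [1, 0]) ∧
      (Odd n → sWord (cfCoeff α) (n + 1) = π ++ [0, 1]) := by
  obtain ⟨m, rfl⟩ := Nat.exists_eq_add_of_le' hn
  obtain ⟨k, hk⟩ := Nat.exists_eq_add_of_le' (cfCoeff_pos α hirr hα (m + 2))
  have key : ∀ u v, PalInv (sWord (cfCoeff α) (m + 2)) (sWord (cfCoeff α) (m + 1)) u v →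
      ∃ π : List ℝ, π.reverse = π ∧ sWord (cfCoeff α) (m + 2 + 1) = π ++ [u, v] := by
    intro u v h
    obtain ⟨r, h1, -, -, h4, -⟩ := h.iter k
    refine ⟨r, h1, ?_⟩
    rw [← h4, sWord, hk, List.replicate_succ, List.flatten_cons, List.append_assoc]
  have inv := palInv_sWord (cfCoeff α) (m + 1)
  rcases Nat.even_or_odd (m + 2) with h | h
  · obtain ⟨r, h1, h2⟩ := key 1 0 (inv.2 (by grind))
    exact ⟨r, h1, fun _ => h2, fun h' => absurd h (Nat.not_even_iff_odd.2 h')⟩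
  · obtain ⟨r, h1, h2⟩ := key 0 1 (inv.1 (by grind))
    exact ⟨r, h1, fun h' => absurd h' (Nat.not_even_iff_odd.2 h), fun _ => h2⟩
end

section
/- For every θ ∈ [0,1), the set of finite nonempty subwords of the two-sided sequence v_{α,θ} equals the set of finite nonempty subwords of the one-sided infinite word c_α; consequently W_α = Sub(c_α) = Sub(v_{α,θ}) for all θ ∈ [0,1). -/
open scoped Classical

lemma sturmian_eq {α : ℝ} (hα : α ∈ Set.Ioo (0 : ℝ) 1) (θ : ℝ) (n : ℤ) :
    sturmian α θ n = ((⌊((n : ℝ) + 1) * α + θ⌋ - ⌊(n : ℝ) * α + θ⌋ : ℤ) : ℝ) := by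
  obtain ⟨h0, h1⟩ := hα
  unfold sturmian
  have e : ((n : ℝ) + 1) * α + θ = (n * α + θ) + α := by ring
  rw [e]
  generalize (n : ℝ) * α + θ = x
  have hx := Int.floor_add_fract x
  have hf0 := Int.fract_nonneg x
  have hf1 := Int.fract_lt_one x
  split_ifs with h
  · have : ⌊x + α⌋ = ⌊x⌋ + 1 := by
      rw [Int.floor_eq_iff]; push_cast
      constructor <;> linarith [h.1]
    rw [this]; simp
  · have h' : Int.fract x < 1 - α := by
      by_contra hc
      exact h ⟨not_lt.mp hc, hf1⟩
    have : ⌊x + α⌋ = ⌊x⌋ := by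
      rw [Int.floor_eq_iff]
      constructor <;> linarith
    rw [this]; simp

lemma density {α : ℝ} (hirr : Irrational α) (x ε : ℝ) (hε : 0 < ε) :
    ∃ n : ℕ, 1 ≤ n ∧ ∃ m : ℤ, x < n * α + m ∧ n * α + m < x + ε := by
  have hd : DenseRange (fun n : ℕ => n • (α : AddCircle (1 : ℝ))) := by
    have : Fact ((0 : ℝ) < 1) := ⟨one_pos⟩
    rw [← denseRange_zsmul_iff_nsmul, AddCircle.denseRange_zsmul_coe_iff]
    simpa using hirr
  have ho : IsOpen ((fun y : ℝ => (y : AddCircle (1 : ℝ))) '' Set.Ioo (x - α) (x - α + ε)) :=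
    QuotientAddGroup.isOpenMap_coe _ isOpen_Ioo
  have hne : ((fun y : ℝ => (y : AddCircle (1 : ℝ))) ''
      Set.Ioo (x - α) (x - α + ε)).Nonempty := by
    apply Set.Nonempty.image
    rw [Set.nonempty_Ioo]; linarith
  obtain ⟨n, y, ⟨hy1, hy2⟩, hy⟩ := hd.exists_mem_open ho hne
  have hy' : ((y - n * α : ℝ) : AddCircle (1 : ℝ)) = 0 := by
    simp only at hy
    rw [AddCircle.coe_sub, hy, ← nsmul_eq_mul, AddCircle.coe_nsmul, sub_self]
  rw [AddCircle.coe_eq_zero_iff] at hy'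
  obtain ⟨m, hm⟩ := hy'
  simp at hm
  refine ⟨n + 1, by omega, m, ?_, ?_⟩ <;> push_cast <;> linarith

lemma transfer {α : ℝ} (hirr : Irrational α) (hα : α ∈ Set.Ioo (0 : ℝ) 1) (θ θ' : ℝ) (k : ℤ)
    (L : ℕ) : ∃ k' : ℕ, 1 ≤ k' ∧ ∀ i : ℕ, i < L →
      sturmian α θ (k + i) = sturmian α θ' ((k' : ℤ) + i) := by
  have hev : ∀ᶠ t in nhdsWithin (0 : ℝ) (Set.Ioi 0), ∀ i ∈ Finset.range (L + 1),
      t < 1 - Int.fract ((k + i) * α + θ) := by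
    rw [Filter.eventually_all_finset]
    intro i _
    apply nhdsWithin_le_nhds
    apply eventually_lt_nhds
    linarith [Int.fract_lt_one (((k : ℝ) + i) * α + θ)]
  obtain ⟨ε, hε, hh⟩ := (mem_nhdsGT_iff_exists_Ioo_subset (a := (0 : ℝ))).1 hev
  obtain ⟨n, hn, m, h1, h2⟩ := density hirr (k * α + θ - θ') ε hε
  refine ⟨n, hn, fun i hi => ?_⟩
  have hT := hh (show (n * α + m + θ' - (k * α + θ)) ∈ Set.Ioo 0 ε by constructor <;> linarith)
  have key : ∀ i ∈ Finset.range (L + 1),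
      ⌊((n : ℝ) + i) * α + θ'⌋ = ⌊((k : ℝ) + i) * α + θ⌋ - m := by
    intro i hi
    have := hT i hi
    have hf0 := Int.fract_nonneg (((k : ℝ) + i) * α + θ)
    have hx := Int.floor_add_fract (((k : ℝ) + i) * α + θ)
    rw [Int.floor_eq_iff]; push_cast
    constructor <;> linarith
  rw [sturmian_eq hα, sturmian_eq hα]
  have k1 := key i (by simp; omega)
  have k2 := key (i + 1) (by simp; omega)
  push_cast at k1 k2 ⊢
  rw [← add_assoc, ← add_assoc] at k2
  rw [k1, k2]
  push_cast
  ring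

/-- Denominators, shifted: `QQ a n = q_{n-1}`. -/
def QQ (a : ℕ → ℕ) : ℕ → ℤ
  | 0 => 0
  | 1 => 1
  | n + 2 => a (n + 1) * QQ a (n + 1) + QQ a n

/-- Numerators, shifted: `PP a n = p_{n-1}`. -/
def PP (a : ℕ → ℕ) : ℕ → ℤ
  | 0 => 1
  | 1 => 0
  | n + 2 => a (n + 1) * PP a (n + 1) + PP a n

lemma gauss_irr {α : ℝ} (hirr : Irrational α) (hα : α ∈ Set.Ioo (0 : ℝ) 1) (n : ℕ) :
    Irrational (cfGauss α n) ∧ 0 < cfGauss α n ∧ cfGauss α n < 1 := by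
  induction n with
  | zero => exact ⟨hirr, hα.1, hα.2⟩
  | succ n ih =>
    have h1 : Irrational (cfGauss α (n + 1)) := by
      have : Irrational (cfGauss α n)⁻¹ := ih.1.inv
      show Irrational (Int.fract (cfGauss α n)⁻¹)
      unfold Int.fract
      exact this.sub_intCast _
    refine ⟨h1, ?_, Int.fract_lt_one _⟩
    exact lt_of_le_of_ne (Int.fract_nonneg _) (Ne.symm h1.ne_zero)

lemma coeff_eq {α : ℝ} (hirr : Irrational α) (hα : α ∈ Set.Ioo (0 : ℝ) 1) (n : ℕ) :
    (cfCoeff α (n + 1) : ℝ) = (cfGauss α n)⁻¹ - cfGauss α (n + 1) := by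
  obtain ⟨_, h0, _⟩ := gauss_irr hirr hα n
  show ((⌊(cfGauss α n)⁻¹⌋₊ : ℕ) : ℝ) = (cfGauss α n)⁻¹ - Int.fract (cfGauss α n)⁻¹
  rw [natCast_floor_eq_intCast_floor (by positivity)]
  rw [Int.self_sub_fract]

lemma coeff_pos {α : ℝ} (hirr : Irrational α) (hα : α ∈ Set.Ioo (0 : ℝ) 1) (n : ℕ) :
    1 ≤ cfCoeff α (n + 1) := by
  obtain ⟨_, h0, h1⟩ := gauss_irr hirr hα n
  show 1 ≤ ⌊(cfGauss α n)⁻¹⌋₊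
  rw [Nat.one_le_floor_iff]
  exact (one_lt_inv₀ h0).2 h1 |>.le

/-- `D n = Q n α - P n`. -/
noncomputable def DD (α : ℝ) (n : ℕ) : ℝ := QQ (cfCoeff α) n * α - PP (cfCoeff α) n

lemma DD_rec (α : ℝ) (n : ℕ) :
    DD α (n + 2) = cfCoeff α (n + 1) * DD α (n + 1) + DD α n := by
  simp only [DD, QQ, PP]; push_cast; ring

lemma DD_succ {α : ℝ} (hirr : Irrational α) (hα : α ∈ Set.Ioo (0 : ℝ) 1) (n : ℕ) :
    DD α (n + 1) = - cfGauss α n * DD α n := by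
  induction n with
  | zero => simp [DD, QQ, PP, cfGauss]
  | succ n ih =>
    obtain ⟨_, h0, h1⟩ := gauss_irr hirr hα n
    rw [DD_rec, coeff_eq hirr hα, ih]
    field_simp
    ring

lemma DD_ne {α : ℝ} (hirr : Irrational α) (hα : α ∈ Set.Ioo (0 : ℝ) 1) (n : ℕ) :
    DD α n ≠ 0 := by
  induction n with
  | zero => simp [DD, QQ, PP]
  | succ n ih =>
    obtain ⟨_, h0, h1⟩ := gauss_irr hirr hα n
    rw [DD_succ hirr hα]
    exact mul_ne_zero (by linarith) ih

lemma QQ_pos {α : ℝ} (hirr : Irrational α) (hα : α ∈ Set.Ioo (0 : ℝ) 1) (n : ℕ) :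
    0 ≤ QQ (cfCoeff α) n ∧ 1 ≤ QQ (cfCoeff α) (n + 1) ∧
      (n : ℤ) + 1 ≤ QQ (cfCoeff α) (n + 2) := by
  induction n with
  | zero =>
    have := coeff_pos hirr hα 0
    simp [QQ] at *; omega
  | succ n ih =>
    obtain ⟨h0, h1, h2⟩ := ih
    refine ⟨by omega, by rw [show n + 1 + 1 = n + 2 from rfl]; omega, ?_⟩
    have := coeff_pos hirr hα (n + 1)
    have e : QQ (cfCoeff α) (n + 1 + 2) = cfCoeff α (n + 1 + 1) * QQ (cfCoeff α) (n + 2)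
      + QQ (cfCoeff α) (n + 1) := rfl
    rw [e]
    push_cast
    have : (1 : ℤ) ≤ cfCoeff α (n + 1 + 1) := by exact_mod_cast this
    nlinarith

lemma det_eq (a : ℕ → ℕ) (n : ℕ) :
    (QQ a n * PP a (n + 1) - QQ a (n + 1) * PP a n) ^ 2 = 1 := by
  induction n with
  | zero => simp [QQ, PP]
  | succ n ih =>
    rw [← ih]
    simp only [QQ, PP]
    ring

lemma best {α : ℝ} (hirr : Irrational α) (hα : α ∈ Set.Ioo (0 : ℝ) 1) (n : ℕ) (j m : ℤ)
    (hj : 0 < j) (hj2 : j < QQ (cfCoeff α) (n + 1)) :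
    |DD α n| ≤ |j * α - m| := by
  set q := QQ (cfCoeff α) n with hq
  set q' := QQ (cfCoeff α) (n + 1) with hq'
  set p := PP (cfCoeff α) n with hp
  set p' := PP (cfCoeff α) (n + 1) with hp'
  have hdet : (q * p' - q' * p) ^ 2 = 1 := det_eq _ n
  set d := q * p' - q' * p with hd
  obtain ⟨x, hx⟩ : ∃ x, x = d * (j * p' - m * q') := ⟨_, rfl⟩
  obtain ⟨y, hy⟩ : ∃ y, y = d * (q * m - p * j) := ⟨_, rfl⟩
  have e1 : j = x * q + y * q' := by
    rw [hx, hy]; linear_combination (-j) * hdet + j * d * hd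
  have e2 : m = x * p + y * p' := by
    rw [hx, hy]; linear_combination (-m) * hdet + m * d * hd
  have q0 : 0 ≤ q := (QQ_pos hirr hα n).1
  have q1 : 1 ≤ q' := (QQ_pos hirr hα n).2.1
  have e3 : (j : ℝ) * α - m = DD α n * (x - y * cfGauss α n) := by
    have hs := DD_succ hirr hα n
    have e1' : (j : ℝ) = x * q + y * q' := by exact_mod_cast e1
    have e2' : (m : ℝ) = x * p + y * p' := by exact_mod_cast e2
    have d1 : DD α n = q * α - p := rfl
    have d2 : DD α (n + 1) = q' * α - p' := rfl
    rw [e1', e2']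
    linear_combination (-(x : ℝ)) * d1 - y * d2 + y * hs
  obtain ⟨_, g0, g1⟩ := gauss_irr hirr hα n
  have h1 : (1 : ℝ) ≤ |x - y * cfGauss α n| := by
    rcases lt_trichotomy y 0 with hy0 | hy0 | hy0
    · have : 1 ≤ x := by
        by_contra hc
        nlinarith
      have hx' : (1 : ℝ) ≤ x := by exact_mod_cast this
      have hy' : (y : ℝ) < 0 := by exact_mod_cast hy0
      refine le_trans ?_ (le_abs_self _)
      nlinarith
    · subst hy0
      have : x ≠ 0 := by
        rintro rfl
        simp at e1; omega
      simp
      exact_mod_cast Int.one_le_abs this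
    · have : x ≤ -1 := by
        by_contra hc
        nlinarith
      have hx' : (x : ℝ) ≤ -1 := by exact_mod_cast this
      have hy' : (0 : ℝ) < y := by exact_mod_cast hy0
      refine le_trans ?_ (neg_le_abs _)
      nlinarith
  rw [e3, abs_mul]
  nlinarith [abs_nonneg (DD α n)]

lemma floor_shift {α : ℝ} (hirr : Irrational α) (hα : α ∈ Set.Ioo (0 : ℝ) 1) (n : ℕ) (j : ℤ)
    (hj : 0 < j) (hj2 : j < QQ (cfCoeff α) (n + 1)) :
    ⌊((j + QQ (cfCoeff α) n : ℤ) : ℝ) * α⌋ = ⌊(j : ℝ) * α⌋ + PP (cfCoeff α) n := by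
  have b1 := best hirr hα n j ⌊(j : ℝ) * α⌋ hj hj2
  have b2 := best hirr hα n j (⌊(j : ℝ) * α⌋ + 1) hj hj2
  have f1 := Int.floor_le ((j : ℝ) * α)
  have f2 := Int.lt_floor_add_one ((j : ℝ) * α)
  push_cast at b2
  rw [abs_of_nonneg (a := (j : ℝ) * α - _) (by linarith)] at b1
  rw [abs_of_nonpos (a := (j : ℝ) * α - _) (by linarith)] at b2
  have d1 : DD α n = QQ (cfCoeff α) n * α - PP (cfCoeff α) n := rfl
  have a1 := le_abs_self (DD α n)
  have a2 := neg_le_abs (DD α n)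
  have q0 := (QQ_pos hirr hα n).1
  have hne : ((j + QQ (cfCoeff α) n : ℤ) : ℝ) * α ≠
      ((⌊(j : ℝ) * α⌋ + PP (cfCoeff α) n + 1 : ℤ) : ℝ) :=
    (hirr.intCast_mul (by omega)).ne_int _
  rw [Int.floor_eq_iff]
  push_cast at hne ⊢
  refine ⟨by linarith, lt_of_le_of_ne (by linarith) hne⟩

lemma coe_map (g : ℤ → ℝ) (l : List ℕ) :
    List.map g (do let a ← l; pure (a : ℤ)) = l.map fun k : ℕ => g (k : ℤ) := by
  induction l with
  | nil => rfl
  | cons a l ih =>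
    simp only [List.pure_def, List.bind_eq_flatMap, List.flatMap_cons, List.map_append,
      List.map_cons, List.map_nil, List.singleton_append] at ih ⊢
    rw [ih]

lemma sturmianWord_eq (α θ : ℝ) (n : ℕ) :
    sturmianWord α θ n = (List.range n).map fun k : ℕ => sturmian α θ ((k : ℤ) + 1) :=
  coe_map (fun k => sturmian α θ (k + 1)) (List.range n)

lemma mem_SubZ (v : ℤ → ℝ) (w : List ℝ) :
    w ∈ SubZ v ↔ w ≠ [] ∧
      ∃ k : ℤ, w = (List.range w.length).map fun i : ℕ => v (k + (i : ℤ)) := by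
  have h : ∀ k : ℤ, _ := fun k => coe_map (fun i => v (k + i)) (List.range w.length)
  constructor
  · rintro ⟨h1, k, hk⟩
    exact ⟨h1, k, hk.trans (h k)⟩
  · rintro ⟨h1, k, hk⟩
    exact ⟨h1, k, hk.trans (h k).symm⟩

lemma sturmian_periodic {α : ℝ} (hirr : Irrational α) (hα : α ∈ Set.Ioo (0 : ℝ) 1) (n : ℕ)
    (j : ℤ) (hj : 0 < j) (hj2 : j + 1 < QQ (cfCoeff α) (n + 1)) :
    sturmian α 0 (QQ (cfCoeff α) n + j) = sturmian α 0 j := by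
  have h1 := floor_shift hirr hα n j hj (by omega)
  have h2 := floor_shift hirr hα n (j + 1) (by omega) hj2
  rw [sturmian_eq hα, sturmian_eq hα]
  simp only [add_zero]
  have e1 : ((QQ (cfCoeff α) n + j : ℤ) : ℝ) = ((j + QQ (cfCoeff α) n : ℤ) : ℝ) := by
    push_cast; ring
  have e2 : ((QQ (cfCoeff α) n + j : ℤ) : ℝ) + 1 = ((j + 1 + QQ (cfCoeff α) n : ℤ) : ℝ) := by
    push_cast; ring
  rw [e2, h2, e1, h1]
  push_cast
  ring

lemma sturmianWord_add (α : ℝ) (q L : ℕ)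
    (h : ∀ j : ℕ, j < L → sturmian α 0 ((q : ℤ) + (j + 1)) = sturmian α 0 (j + 1)) :
    sturmianWord α 0 (q + L) = sturmianWord α 0 q ++ sturmianWord α 0 L := by
  simp only [sturmianWord_eq]
  rw [List.range_add, List.map_append, List.map_map]
  congr 1
  apply List.map_congr_left
  intro j hj
  rw [← h j (List.mem_range.1 hj)]
  simp [add_assoc]

lemma sWord_step {α : ℝ} (hirr : Irrational α) (hα : α ∈ Set.Ioo (0 : ℝ) 1) (n : ℕ)
    (hq : 2 ≤ QQ (cfCoeff α) (n + 2))
    (h1 : sWord (cfCoeff α) (n + 2) = sturmianWord α 0 (QQ (cfCoeff α) (n + 2)).toNat)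
    (h0 : sWord (cfCoeff α) (n + 1) = sturmianWord α 0 (QQ (cfCoeff α) (n + 1)).toNat) :
    sWord (cfCoeff α) (n + 3) = sturmianWord α 0 (QQ (cfCoeff α) (n + 3)).toNat := by
  have hrec : QQ (cfCoeff α) (n + 3) =
      cfCoeff α (n + 2) * QQ (cfCoeff α) (n + 2) + QQ (cfCoeff α) (n + 1) := rfl
  have hp := sturmian_periodic hirr hα (n + 2)
  have q0 := (QQ_pos hirr hα n).2.1
  rw [show n + 2 + 1 = n + 3 from rfl, hrec] at hp
  rw [hrec]
  show (List.replicate (cfCoeff α (n + 2)) (sWord (cfCoeff α) (n + 2))).flatten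
    ++ sWord (cfCoeff α) (n + 1) = _
  rw [h1, h0]
  generalize QQ (cfCoeff α) (n + 2) = q1 at *
  generalize QQ (cfCoeff α) (n + 1) = q2 at *
  lift q1 to ℕ using by omega
  lift q2 to ℕ using by omega
  generalize cfCoeff α (n + 2) = a at *
  have key : ∀ k : ℕ, k ≤ a → (List.replicate k (sturmianWord α 0 q1)).flatten
      ++ sturmianWord α 0 q2 = sturmianWord α 0 (k * q1 + q2) := by
    intro k
    induction k with
    | zero => simp
    | succ k ih =>
      intro hk
      rw [List.replicate_succ, List.flatten_cons, List.append_assoc, ih (by omega),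
        show (k + 1) * q1 + q2 = q1 + (k * q1 + q2) by ring]
      rw [sturmianWord_add α q1 (k * q1 + q2)]
      intro j hj
      apply hp
      · omega
      · have : (k + 1) * q1 ≤ a * q1 := Nat.mul_le_mul_right _ hk
        have h2 : j + 1 + 1 < a * q1 + q2 := by
          have : (k + 1) * q1 = k * q1 + q1 := by ring
          omega
        exact_mod_cast h2
  have := key a le_rfl
  rw [← Nat.cast_mul, ← Nat.cast_add, Int.toNat_natCast, Int.toNat_natCast, Int.toNat_natCast]
  exact this

lemma sturmian_val {α : ℝ} (hα : α ∈ Set.Ioo (0 : ℝ) 1) (n m m' : ℤ)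
    (h1 : (m : ℝ) ≤ n * α) (h2 : n * α < m + 1)
    (h3 : (m' : ℝ) ≤ (n + 1) * α) (h4 : (n + 1) * α < m' + 1) :
    sturmian α 0 n = ((m' - m : ℤ) : ℝ) := by
  rw [sturmian_eq hα, add_zero, add_zero, Int.floor_eq_iff.2 ⟨h1, h2⟩, Int.floor_eq_iff.2 ⟨h3, h4⟩]

lemma word_const (α : ℝ) (b : ℕ) (x y : ℝ)
    (h : ∀ j : ℕ, j < b → sturmian α 0 (j + 1) = x) (h' : sturmian α 0 (b + 1) = y) :
    sturmianWord α 0 (b + 1) = List.replicate b x ++ [y] := by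
  simp only [sturmianWord_eq]
  rw [List.range_succ, List.map_append]
  congr 1
  · rw [List.eq_replicate_iff]
    simp only [List.length_map, List.length_range, List.mem_map, List.mem_range, true_and]
    rintro z ⟨j, hj, rfl⟩
    exact h j hj
  · simp [h']

lemma a1_bounds {α : ℝ} (hα : α ∈ Set.Ioo (0 : ℝ) 1) :
    (cfCoeff α 1 : ℝ) * α ≤ 1 ∧ 1 < ((cfCoeff α 1 : ℝ) + 1) * α := by
  have h0 := hα.1
  have e : cfCoeff α 1 = ⌊α⁻¹⌋₊ := rfl
  rw [e]
  have f1 := Nat.floor_le (a := α⁻¹) (by positivity)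
  have f2 := Nat.lt_floor_add_one α⁻¹
  have e : α⁻¹ * α = 1 := inv_mul_cancel₀ h0.ne'
  constructor <;> nlinarith

lemma sWord_two {α : ℝ} (hirr : Irrational α) (hα : α ∈ Set.Ioo (0 : ℝ) 1) :
    sWord (cfCoeff α) 2 = sturmianWord α 0 (QQ (cfCoeff α) 2).toNat := by
  obtain ⟨b1, b2⟩ := a1_bounds hα
  have h0 := hα.1
  have hl := hα.2
  have hp := coeff_pos hirr hα 0
  simp only [zero_add] at hp
  have e : (QQ (cfCoeff α) 2).toNat = cfCoeff α 1 := by simp [QQ]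
  rw [e]
  show List.replicate (cfCoeff α 1 - 1) (0 : ℝ) ++ [1] = _
  obtain ⟨b, hb⟩ : ∃ b, cfCoeff α 1 = b + 1 := ⟨_, (Nat.sub_add_cancel hp).symm⟩
  have hne : (cfCoeff α 1 : ℝ) * α ≠ 1 := by
    have := (hirr.natCast_mul (m := cfCoeff α 1) (by omega)).ne_nat 1
    simpa using this
  have b1 := lt_of_le_of_ne b1 hne
  rw [hb] at b1 b2 ⊢
  push_cast at b1 b2
  symm
  apply word_const
  · intro j hj
    have hj' : (j : ℝ) + 1 ≤ b := by exact_mod_cast hj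
    have := sturmian_val hα (j + 1) 0 0 (by push_cast; positivity) (by push_cast; nlinarith)
      (by push_cast; positivity) (by push_cast; nlinarith)
    simpa using this
  · have := sturmian_val hα (b + 1) 0 1 (by push_cast; positivity) (by push_cast; nlinarith)
      (by push_cast; nlinarith) (by push_cast; nlinarith)
    simpa using this

lemma sWord_three {α : ℝ} (hirr : Irrational α) (hα : α ∈ Set.Ioo (0 : ℝ) 1) :
    sWord (cfCoeff α) 3 = sturmianWord α 0 (QQ (cfCoeff α) 3).toNat := by
  obtain ⟨b1, b2⟩ := a1_bounds hα
  have h0 := hα.1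
  have hl := hα.2
  have hp := coeff_pos hirr hα 0
  simp only [zero_add] at hp
  rcases Nat.lt_or_ge 1 (cfCoeff α 1) with h | h
  · apply sWord_step hirr hα 0
    · simp [QQ]; omega
    · exact sWord_two hirr hα
    · have e : (QQ (cfCoeff α) (0 + 1)).toNat = 0 + 1 := by simp [QQ]
      rw [e, word_const α 0 0 0]
      · rfl
      · simp
      · have h' : (2 : ℝ) ≤ cfCoeff α 1 := by exact_mod_cast h
        have hne : (2 : ℝ) * α ≠ 1 := by
          have := (hirr.natCast_mul (m := 2) (by omega)).ne_nat 1
          simpa using this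
        have hlt : (2 : ℝ) * α < 1 := lt_of_le_of_ne (by nlinarith) hne
        have := sturmian_val hα 1 0 0 (by push_cast; linarith) (by push_cast; linarith)
          (by push_cast; linarith) (by push_cast; linarith)
        simpa using this
  · have h1 : cfCoeff α 1 = 1 := by omega
    have e : (QQ (cfCoeff α) 3).toNat = cfCoeff α 2 + 1 := by
      have : QQ (cfCoeff α) 3 = ((cfCoeff α 2 + 1 : ℕ) : ℤ) := by simp [QQ, h1]
      rw [this, Int.toNat_natCast]
    rw [e]
    have hw : sWord (cfCoeff α) 3 = List.replicate (cfCoeff α 2) (1 : ℝ) ++ [0] := by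
      simp [sWord, h1]
    rw [hw]
    have hG := gauss_irr hirr hα 1
    have hc := coeff_eq hirr hα 0
    simp only [zero_add, h1] at hc
    have e0 : cfGauss α 0 = α := rfl
    rw [e0] at hc
    have hc2 := coeff_eq hirr hα 1
    have hG2 := gauss_irr hirr hα 2
    simp only [Nat.reduceAdd] at hc2
    set G := cfGauss α 1
    have hG0 := hG.2.1
    have eG : α * (1 + G) = 1 := by
      have : 1 + G = α⁻¹ := by push_cast at hc; linarith
      rw [this]; exact mul_inv_cancel₀ h0.ne'
    have iG : G⁻¹ * G = 1 := inv_mul_cancel₀ hG0.ne'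
    have u1 : (cfCoeff α 2 : ℝ) * G ≤ 1 := by nlinarith [hG2.2.1]
    have u2 : 1 < ((cfCoeff α 2 : ℝ) + 1) * G := by nlinarith [hG2.2.2]
    generalize cfCoeff α 2 = b at *
    have eG' : 1 - α = α * G := by linarith
    have hlow : ∀ j : ℝ, j ≤ b → j ≤ (j + 1) * α := by
      intro j hj
      have : j * G ≤ 1 := by nlinarith
      nlinarith
    symm
    apply word_const
    · intro j hj
      have hj' : (j : ℝ) + 1 ≤ b := by exact_mod_cast hj
      have hj0 : (0 : ℝ) ≤ j := by positivity
      have := sturmian_val hα (j + 1) j (j + 1)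
        (by push_cast; exact hlow _ (by linarith)) (by push_cast; nlinarith)
        (by push_cast; exact hlow _ (by linarith)) (by push_cast; nlinarith)
      simpa using this
    · have hj0 : (0 : ℝ) ≤ b := by positivity
      have hlt : ((b : ℝ) + 1 + 1) * α < b + 1 := by nlinarith
      have := sturmian_val hα (b + 1) b b
        (by push_cast; exact hlow _ le_rfl) (by push_cast; nlinarith)
        (by push_cast; linarith [hlow b le_rfl]) (by push_cast; exact hlt)
      simpa using this

lemma sWord_eq {α : ℝ} (hirr : Irrational α) (hα : α ∈ Set.Ioo (0 : ℝ) 1) (n : ℕ) :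
    sWord (cfCoeff α) (n + 2) = sturmianWord α 0 (QQ (cfCoeff α) (n + 2)).toNat ∧
    sWord (cfCoeff α) (n + 3) = sturmianWord α 0 (QQ (cfCoeff α) (n + 3)).toNat := by
  induction n with
  | zero => exact ⟨sWord_two hirr hα, sWord_three hirr hα⟩
  | succ n ih =>
    refine ⟨ih.2, ?_⟩
    apply sWord_step hirr hα (n + 1)
    · have := (QQ_pos hirr hα (n + 1)).2.2
      push_cast at this
      omega
    · exact ih.2
    · exact ih.1

lemma cword_eq {α : ℝ} (hirr : Irrational α) (hα : α ∈ Set.Ioo (0 : ℝ) 1) (n : ℕ)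
    (hn : 1 ≤ n) : cword α n = sturmian α 0 n := by
  obtain ⟨n, rfl⟩ : ∃ k, n = k + 1 := ⟨n - 1, by omega⟩
  unfold cword
  rw [(sWord_eq hirr hα n).1]
  have := (QQ_pos hirr hα n).2.2
  have hlt : n < (QQ (cfCoeff α) (n + 2)).toNat := by omega
  rw [sturmianWord_eq]
  simp [List.getD_eq_getElem?_getD, hlt]

lemma SubZ_eq {α : ℝ} (hirr : Irrational α) (hα : α ∈ Set.Ioo (0 : ℝ) 1) (θ : ℝ) :
    SubZ (sturmian α θ) = SubC α := by
  ext w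
  rw [mem_SubZ]
  constructor
  · rintro ⟨hw, k, hk⟩
    obtain ⟨k', hk', h⟩ := transfer hirr hα θ 0 k w.length
    refine ⟨hw, k', hk', hk.trans ?_⟩
    apply List.map_congr_left
    intro i hi
    rw [h i (List.mem_range.1 hi), cword_eq hirr hα _ (by omega)]
    push_cast; rfl
  · rintro ⟨hw, k, hk1, hk⟩
    obtain ⟨k', hk', h⟩ := transfer hirr hα 0 θ k w.length
    refine ⟨hw, k', hk.trans ?_⟩
    apply List.map_congr_left
    intro i hi
    rw [← h i (List.mem_range.1 hi), cword_eq hirr hα _ (by omega)]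
    push_cast; rfl

theorem subwords_independent_of_theta
    (α : ℝ) (hirr : Irrational α) (hα : α ∈ Set.Ioo (0 : ℝ) 1) :
    ∀ θ ∈ Set.Ico (0 : ℝ) 1,
      SubZ (sturmian α θ) = SubC α ∧ Walpha α = SubC α ∧ Walpha α = SubZ (sturmian α θ) := by
  intro θ hθ
  have h := SubZ_eq hirr hα
  have hW : Walpha α = SubC α := by
    ext w
    constructor
    · rintro ⟨θ', _, hw⟩
      rwa [h] at hw
    · intro hw
      exact ⟨θ, hθ, by rwa [h]⟩
  exact ⟨h θ, hW, hW.trans (h θ).symm⟩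
end

section
/- For every word w ∈ W_α there exist t ∈ ℕ, a (possibly empty) word x that is a suffix of s_t or of s_{t−1}, and a (possibly empty) word y that is a prefix of s_{t+1}, such that w = x y. -/
open scoped Classical

namespace SturmDec

/-- A height function with slope `α` and discrepancy less than one. -/
def Bal (α : ℝ) (h : ℤ → ℤ) : Prop :=
  ∀ i j : ℤ, i < j → |((h j : ℝ) - h i) - ((j : ℝ) - i) * α| < 1

/-- Increments. -/
def D (h : ℤ → ℤ) (n : ℤ) : ℤ := h (n + 1) - h n

/-- Segment of a two-sided sequence. -/
def seg (v : ℤ → ℤ) (i : ℤ) (n : ℕ) : List ℤ := (List.range n).map fun k : ℕ => v (i + (k : ℤ))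

/-- The substitution. -/
def phi (a : ℕ) (e : ℤ) : List ℤ :=
  List.replicate (a - 1) 0 ++ [1] ++ (if e = 1 then [0] else [])

lemma seg_add (v : ℤ → ℤ) (i : ℤ) (n m : ℕ) :
    seg v i (n + m) = seg v i n ++ seg v (i + n) m := by
  simp [seg, List.range_add, Function.comp_def, add_assoc]

lemma seg_one (v : ℤ → ℤ) (i : ℤ) : seg v i 1 = [v i] := by
  simp [seg]

lemma seg_sub (v : ℤ → ℤ) (i k : ℤ) (n l : ℕ) (h1 : i ≤ k) (h2 : k + l ≤ i + n) :
    seg v k l <:+: seg v i n := by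
  obtain ⟨p, hp⟩ : ∃ p : ℕ, (p : ℤ) = k - i := ⟨(k - i).toNat, by omega⟩
  obtain ⟨q, hq⟩ : ∃ q : ℕ, (q : ℤ) = i + n - (k + l) := ⟨(i + n - (k + l)).toNat, by omega⟩
  have hn : n = p + l + q := by omega
  have hk : k = i + p := by omega
  rw [hn, seg_add, seg_add, hk]
  exact ⟨_, _, rfl⟩

lemma Bal.step {α : ℝ} {h : ℤ → ℤ} (hb : Bal α h) (h0 : 0 < α) (h1 : α < 1) (n : ℤ) :
    h (n + 1) = h n ∨ h (n + 1) = h n + 1 := by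
  have := hb n (n + 1) (by omega)
  rw [abs_lt] at this
  push_cast at this
  obtain ⟨ha, hc⟩ := this
  have h2 : (h n : ℝ) - 1 < h (n + 1) := by linarith
  have h3 : (h (n + 1) : ℝ) < h n + 2 := by linarith
  have h2' : h n - 1 < h (n + 1) := by exact_mod_cast h2
  have h3' : h (n + 1) < h n + 2 := by exact_mod_cast h3
  omega

lemma Bal.mono {α : ℝ} {h : ℤ → ℤ} (hb : Bal α h) (h0 : 0 < α) (h1 : α < 1) : Monotone h := by
  apply monotone_int_of_le_succ
  intro n
  rcases hb.step h0 h1 n with h | h <;> omega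

lemma Bal.exists_N {α : ℝ} {h : ℤ → ℤ} (hb : Bal α h) (h0 : 0 < α) (h1 : α < 1) (m : ℤ) :
    ∃ n, h n = m ∧ h (n - 1) = m - 1 ∧ ∀ z, m ≤ h z → n ≤ z := by
  obtain ⟨n, hn, hl⟩ := Int.exists_least_of_bdd (P := fun n => m ≤ h n) (by
    refine ⟨min 0 ⌊((m : ℝ) - h 0 - 1) / α⌋, fun z hz => ?_⟩
    by_cases hz0 : z < 0
    · apply le_trans (min_le_right _ _)
      have := (abs_lt.1 (hb z 0 hz0)).1
      push_cast at this
      have hz' : (m : ℝ) ≤ h z := by exact_mod_cast hz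
      have h5 : ((m : ℝ) - h 0 - 1) / α < z := by
        rw [div_lt_iff₀ h0]; linarith
      have h6 := (Int.floor_le (((m : ℝ) - h 0 - 1) / α)).trans_lt h5
      exact (by exact_mod_cast h6.le)
    · exact le_trans (min_le_left _ _) (by omega)) (by
    obtain ⟨k, hk⟩ := exists_nat_gt (((m : ℝ) - h 0 + 1) / α)
    rw [div_lt_iff₀ h0] at hk
    refine ⟨k + 1, ?_⟩
    have := (abs_lt.1 (hb 0 (k + 1) (by omega))).1
    push_cast at this
    have : (m : ℝ) ≤ h (k + 1) := by nlinarith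
    exact_mod_cast this)
  have hlt : h (n - 1) < m := by
    by_contra hc
    have := hl (n - 1) (by omega)
    omega
  have := hb.step h0 h1 (n - 1)
  rw [sub_add_cancel] at this
  exact ⟨n, by omega, by omega, hl⟩

lemma step_lemma {α β : ℝ} {h : ℤ → ℤ} {a : ℕ} (hb : Bal α h) (h0 : 0 < α) (h1 : α < 1)
    (ha : 1 ≤ a) (hβ : β = α⁻¹ - a) (hβ0 : 0 < β) (hβ1 : β < 1) :
    ∃ h', Bal β h' ∧ ∀ (k : ℤ) (L : ℕ), ∃ (m : ℤ) (M : ℕ),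
      seg (D h) k L <:+: (seg (D h') m M).flatMap (phi a) := by
  have hmono := hb.mono h0 h1
  choose N hN hN1 hNl using hb.exists_N h0 h1
  have hNlt : ∀ i j, i < j → N i < N j := by
    intro i j hij
    by_contra hc
    have := hmono (not_lt.1 hc)
    rw [hN, hN] at this
    omega
  have hbal : Bal β (fun m => N m - a * m) := by
    intro i j hij
    have hlow := (abs_lt.1 (hb (N i - 1) (N j) (by have := hNlt i j hij; omega))).2
    rw [hN, hN1] at hlow
    push_cast at hlow
    have hα : α * α⁻¹ = 1 := mul_inv_cancel₀ h0.ne'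
    have hpos : 0 < α⁻¹ := inv_pos.2 h0
    have hij' : (i : ℝ) < j := by exact_mod_cast hij
    have e1 : ((j : ℝ) - i) * α⁻¹ < (N j : ℝ) - N i + 1 := by
      rw [← div_eq_mul_inv, div_lt_iff₀ h0]; linarith
    have e2 : (N j : ℝ) - N i - 1 < ((j : ℝ) - i) * α⁻¹ := by
      rw [← div_eq_mul_inv, lt_div_iff₀ h0]
      rcases (show N i < N j - 1 ∨ N j = N i + 1 by have := hNlt i j hij; omega) with hc | hc
      · have hup := (abs_lt.1 (hb (N i) (N j - 1) hc)).1
        rw [hN, hN1] at hup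
        push_cast at hup
        linarith
      · rw [hc]; push_cast
        linarith
    rw [abs_lt, hβ]
    push_cast
    constructor <;> linarith
  refine ⟨_, hbal, ?_⟩
  set h' : ℤ → ℤ := fun m => N m - a * m with hh'
  have hD : ∀ m, D h' m = N (m + 1) - N m - a := by
    intro m; simp only [D, hh']; ring
  have hstep : ∀ m, D h' m = 0 ∨ D h' m = 1 := by
    intro m
    have := hbal.step hβ0 hβ1 m
    simp only [D]; simp only [hh'] at this ⊢; omega
  -- letters
  have hzero : ∀ m n, N m ≤ n → n + 1 < N (m + 1) → D h n = 0 := by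
    intro m n hn hn'
    have b1 := hmono hn
    have b2 := hmono (show n ≤ n + 1 by omega)
    have b3 := hmono (show n + 1 ≤ N (m + 1) - 1 by omega)
    rw [hN] at b1
    rw [hN1] at b3
    simp only [D]; omega
  have hone : ∀ m, D h (N m - 1) = 1 := by
    intro m
    simp only [D, sub_add_cancel, hN, hN1]; omega
  have hblock : ∀ m, ∃ l : ℕ, (l : ℤ) = N (m + 1) - N m ∧
      seg (D h) (N m - a) l = phi a (D h' m) := by
    intro m
    have hprev := hstep (m - 1)
    rw [hD, sub_add_cancel] at hprev
    have hbase : seg (D h) (N m - a) (a - 1) = List.replicate (a - 1) 0 := by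
      rw [List.eq_replicate_iff]
      refine ⟨by simp [seg], ?_⟩
      intro b hbm
      simp only [seg, List.mem_map, List.mem_range] at hbm
      obtain ⟨k, hk, rfl⟩ := hbm
      apply hzero (m - 1)
      · omega
      · rw [sub_add_cancel]; omega
    have hbase1 : seg (D h) (N m - a) (a - 1 + 1) = List.replicate (a - 1) 0 ++ [1] := by
      rw [seg_add, hbase, seg_one]
      rw [show N m - (a : ℤ) + ((a - 1 : ℕ) : ℤ) = N m - 1 by omega, hone]
    rcases hstep m with hm | hm
    · refine ⟨a - 1 + 1, ?_, ?_⟩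
      · rw [hD] at hm; omega
      · rw [hbase1, hm]; simp [phi]
    · refine ⟨a - 1 + 1 + 1, ?_, ?_⟩
      · rw [hD] at hm; omega
      · rw [seg_add, hbase1, seg_one, hm]
        rw [hzero m _ (by omega) (by rw [hD] at hm; omega)]
        simp [phi]
  have hblocks : ∀ (m : ℤ) (M : ℕ), ∃ l : ℕ, (l : ℤ) = N (m + M) - N m ∧
      seg (D h) (N m - a) l = (seg (D h') m M).flatMap (phi a) := by
    intro m M
    induction M with
    | zero => exact ⟨0, by simp, by simp [seg]⟩
    | succ M ih =>
      obtain ⟨l, hl, hs⟩ := ih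
      obtain ⟨l', hl', hs'⟩ := hblock (m + M)
      refine ⟨l + l', ?_, ?_⟩
      · push_cast; rw [← add_assoc]; omega
      · rw [seg_add, hs, seg_add, seg_one, List.flatMap_append]
        rw [show N m - (a : ℤ) + l = N (m + M) - a by omega, hs']
        simp
  intro k L
  have q1 : N (h k) ≤ k := hNl _ _ le_rfl
  set q := h (k + L + a) with hq
  have q2 : k + L + a < N (q + 1) := by
    by_contra hc
    have := hmono (not_lt.1 hc)
    rw [hN, ← hq] at this
    omega
  have q3 : h k ≤ q := hmono (by omega)
  obtain ⟨M, hM⟩ : ∃ M : ℕ, (M : ℤ) = q + 1 - h k := ⟨(q + 1 - h k).toNat, by omega⟩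
  obtain ⟨l, hl, hs⟩ := hblocks (h k) M
  rw [show h k + (M : ℤ) = q + 1 by omega] at hl
  refine ⟨h k, M, ?_⟩
  rw [← hs]
  apply seg_sub <;> omega

/-- The blocks. -/
noncomputable def psi (a : ℕ → ℕ) (n : ℕ) (e : ℤ) : List ℝ :=
  sWord a (n + 1) ++ (if e = 1 then sWord a n else [])

lemma psi_phi (a : ℕ → ℕ) (n : ℕ) (hn : 1 ≤ n) (ha : 1 ≤ a (n + 1)) (e : ℤ) :
    (phi (a (n + 1)) e).flatMap (psi a n) = psi a (n + 1) e := by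
  obtain ⟨n, rfl⟩ : ∃ k, n = k + 1 := ⟨n - 1, by omega⟩
  obtain ⟨b, hb⟩ : ∃ b, a (n + 1 + 1) = b + 1 := ⟨a (n + 1 + 1) - 1, by omega⟩
  have hS : sWord a (n + 1 + 1 + 1) =
      (List.replicate b (sWord a (n + 2))).flatten ++ sWord a (n + 2) ++ sWord a (n + 1) := by
    rw [show n + 1 + 1 + 1 = n + 3 from rfl, sWord, show n + 2 = n + 1 + 1 from rfl, hb]
    simp [List.replicate_succ']
  have hrep : ∀ c : ℕ, (List.replicate c (0 : ℤ)).flatMap (psi a (n + 1)) =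
      (List.replicate c (sWord a (n + 2))).flatten := by
    intro c
    simp [List.flatMap, psi]
  rw [hb]
  simp only [phi, List.flatMap_append, Nat.add_sub_cancel, hrep]
  unfold psi
  rw [hS]
  by_cases he : e = 1 <;> simp [he]

lemma psi_one (a : ℕ → ℕ) (e : ℤ) :
    (phi (a 1) e).map (fun z : ℤ => (z : ℝ)) = psi a 1 e := by
  by_cases he : e = 1 <;> simp [phi, psi, sWord, he]

lemma cf_prop (α : ℝ) (hirr : Irrational α) (hα : α ∈ Set.Ioo (0 : ℝ) 1) (n : ℕ) :
    Irrational (cfGauss α n) ∧ 0 < cfGauss α n ∧ cfGauss α n < 1 := by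
  induction n with
  | zero => exact ⟨hirr, hα.1, hα.2⟩
  | succ n ih =>
    have h1 : Irrational (cfGauss α (n + 1)) := by
      rw [cfGauss, Int.fract]
      exact (irrational_inv_iff.2 ih.1).sub_intCast _
    refine ⟨h1, ?_, ?_⟩
    · exact lt_of_le_of_ne (Int.fract_nonneg _) h1.ne_zero.symm
    · exact Int.fract_lt_one _

lemma cf_coeff_pos (α : ℝ) (hirr : Irrational α) (hα : α ∈ Set.Ioo (0 : ℝ) 1) (n : ℕ) :
    1 ≤ cfCoeff α n := by
  obtain ⟨-, h0, h1⟩ := cf_prop α hirr hα (n - 1)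
  rw [cfCoeff, Nat.one_le_floor_iff]
  exact (one_le_inv₀ h0).2 h1.le

lemma cf_succ (α : ℝ) (hirr : Irrational α) (hα : α ∈ Set.Ioo (0 : ℝ) 1) (n : ℕ) :
    cfGauss α (n + 1) = (cfGauss α n)⁻¹ - cfCoeff α (n + 1) := by
  obtain ⟨-, h0, h1⟩ := cf_prop α hirr hα n
  rw [cfGauss, cfCoeff, Int.fract, Nat.add_sub_cancel]
  rw [natCast_floor_eq_intCast_floor (inv_pos.2 h0).le]

lemma level (α : ℝ) (hirr : Irrational α) (hα : α ∈ Set.Ioo (0 : ℝ) 1) (h : ℤ → ℤ)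
    (hb : Bal α h) (k : ℤ) (L : ℕ) (n : ℕ) :
    ∃ h', Bal (cfGauss α (n + 1)) h' ∧ ∃ (m : ℤ) (M : ℕ),
      (seg (D h) k L).map (fun z : ℤ => (z : ℝ)) <:+:
        (seg (D h') m M).flatMap (psi (cfCoeff α) (n + 1)) := by
  have key : ∀ n (h : ℤ → ℤ), Bal (cfGauss α n) h → ∃ h', Bal (cfGauss α (n + 1)) h' ∧
      ∀ (k : ℤ) (L : ℕ), ∃ (m : ℤ) (M : ℕ),
      seg (D h) k L <:+: (seg (D h') m M).flatMap (phi (cfCoeff α (n + 1))) := by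
    intro n h hb
    obtain ⟨-, h0, h1⟩ := cf_prop α hirr hα n
    obtain ⟨-, h0', h1'⟩ := cf_prop α hirr hα (n + 1)
    exact step_lemma hb h0 h1 (cf_coeff_pos α hirr hα _) (cf_succ α hirr hα n) h0' h1'
  induction n with
  | zero =>
    obtain ⟨h', hb', hh⟩ := key 0 h hb
    obtain ⟨m, M, hm⟩ := hh k L
    refine ⟨h', hb', m, M, ?_⟩
    have := hm.map (fun z : ℤ => (z : ℝ))
    rw [List.map_flatMap] at this
    simpa only [zero_add, psi_one] using this
  | succ n ih =>
    obtain ⟨h₁, hb₁, m₁, M₁, hm₁⟩ := ih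
    obtain ⟨h', hb', hh⟩ := key (n + 1) h₁ hb₁
    obtain ⟨m, M, hm⟩ := hh m₁ M₁
    refine ⟨h', hb', m, M, hm₁.trans ?_⟩
    obtain ⟨s, t, hst⟩ := hm
    have := congrArg (fun l => List.flatMap (psi (cfCoeff α) (n + 1)) l) hst
    simp only [List.flatMap_append, List.flatMap_assoc] at this
    simp only [psi_phi _ _ (Nat.le_add_left 1 n) (cf_coeff_pos α hirr hα _)] at this
    exact ⟨_, _, this⟩

/-! Word combinatorics -/

lemma inf_append_cases {w A B : List ℝ} (h : w <:+: A ++ B) :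
    w <:+: A ∨ w <:+: B ∨ ∃ x y, w = x ++ y ∧ x <:+ A ∧ y <+: B := by
  have := List.infix_append_iff.1 h
  tauto

/-- The desired decomposition. -/
def Dec (a : ℕ → ℕ) (w : List ℝ) : Prop :=
  ∃ t : ℕ, 1 ≤ t ∧ ∃ x y : List ℝ,
      (x <:+ sWord a (t + 1) ∨ x <:+ sWord a t) ∧
      y <+: sWord a (t + 2) ∧ w = x ++ y

lemma dec_suffix (a : ℕ → ℕ) (w : List ℝ) (m : ℕ) (hm : 1 ≤ m) (h : w <:+ sWord a m) :
    Dec a w := ⟨m, hm, w, [], Or.inr h, by simp, by simp⟩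

lemma pre_succ (a : ℕ → ℕ) (ha : ∀ n, 1 ≤ a n) (n : ℕ) :
    sWord a (n + 2) <+: sWord a (n + 3) := by
  obtain ⟨b, hb⟩ : ∃ b, a (n + 2) = b + 1 := ⟨a (n + 2) - 1, by have := ha (n + 2); omega⟩
  rw [sWord.eq_4, hb, List.replicate_succ, List.flatten_cons, List.append_assoc]
  exact List.prefix_append _ _

lemma pow_cases {w T R : List ℝ} (b : ℕ) (h : w <:+: (List.replicate b T).flatten ++ R) :
    w <:+: T ∨ w <:+: R ∨ ∃ x y c, w = x ++ y ∧ x <:+ T ∧ c < b ∧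
      y <+: (List.replicate c T).flatten ++ R := by
  induction b with
  | zero => right; left; simpa using h
  | succ b ih =>
    rw [List.replicate_succ, List.flatten_cons, List.append_assoc] at h
    rcases inf_append_cases h with h | h | ⟨x, y, hw, hx, hy⟩
    · exact Or.inl h
    · rcases ih h with h | h | ⟨x, y, c, hw, hx, hc, hy⟩
      · exact Or.inl h
      · exact Or.inr (Or.inl h)
      · exact Or.inr (Or.inr ⟨x, y, c, hw, hx, by omega, hy⟩)
    · exact Or.inr (Or.inr ⟨x, y, b, hw, hx, by omega, hy⟩)

lemma rep_split (T : List ℝ) (c d : ℕ) : (List.replicate (c + d) T).flatten =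
    (List.replicate c T).flatten ++ (List.replicate d T).flatten := by
  rw [List.replicate_add, List.flatten_append]

lemma pre_append_cases {y A B : List ℝ} (h : y <+: A ++ B) :
    y <+: A ∨ ∃ r, y = A ++ r ∧ r <+: B := by
  rcases List.prefix_or_prefix_of_prefix h (List.prefix_append A B) with h' | ⟨r, rfl⟩
  · exact Or.inl h'
  · exact Or.inr ⟨r, rfl, (List.prefix_append_right_inj _).1 h⟩

lemma dec_factor (a : ℕ → ℕ) (ha : ∀ n, 1 ≤ a n) (m : ℕ) (w : List ℝ)
    (h : w <:+: sWord a m) : Dec a w := by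
  induction m using Nat.strong_induction_on generalizing w with
  | _ m ih =>
  match m with
  | 0 =>
    have : w <:+ [1] := by
      rw [sWord] at h
      rcases List.infix_cons_iff.1 h with h | h
      · rcases List.prefix_cons_iff.1 h with h | ⟨t, h, h'⟩
        · simp [h]
        · simp [h, List.prefix_nil.1 h']
      · simp [List.infix_nil.1 h]
    apply dec_suffix a w 2 (by omega)
    rw [sWord]
    exact this.trans (List.suffix_append _ _)
  | 1 =>
    apply dec_suffix a w 1 (by omega)
    rw [sWord] at h ⊢
    rcases List.infix_cons_iff.1 h with h | h
    · rcases List.prefix_cons_iff.1 h with h | ⟨t, h, h'⟩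
      · simp [h]
      · simp [h, List.prefix_nil.1 h']
    · simp [List.infix_nil.1 h]
  | 2 =>
    have hpre := pre_succ a ha 0
    have h00 : ∀ w, w <:+: List.replicate (a 1 - 1) (0 : ℝ) → Dec a w := by
      intro w hw
      refine ⟨1, le_rfl, [], w, by simp, ?_, by simp⟩
      refine List.IsPrefix.trans ?_ hpre
      simp only [sWord]
      refine List.IsPrefix.trans ?_ (List.prefix_append _ _)
      have hlen := hw.length_le
      have : w = List.replicate w.length 0 := by
        rw [List.eq_replicate_iff]
        exact ⟨rfl, fun b hb => List.eq_of_mem_replicate (hw.subset hb)⟩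
      rw [this]
      rw [List.length_replicate] at hlen
      exact ⟨List.replicate (a 1 - 1 - w.length) 0, by
        rw [← List.replicate_add]; congr 1; omega⟩
    rw [sWord] at h
    rcases inf_append_cases h with h | h | ⟨x, y, hw, hx, hy⟩
    · exact h00 _ h
    · exact ih 0 (by omega) w (by rw [sWord]; exact h)
    · rcases List.prefix_cons_iff.1 hy with hy | ⟨t, hy, hy'⟩
      · subst hy
        rw [hw, List.append_nil]
        exact h00 _ hx.isInfix
      · rw [List.prefix_nil] at hy'
        subst hy'
        apply dec_suffix a w 2 (by omega)
        rw [sWord, hw, hy]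
        obtain ⟨z, hz⟩ := hx
        exact ⟨z, by rw [← hz]; simp⟩
  | n + 3 =>
    have hS := sWord.eq_4 a n
    rw [hS] at h
    rcases pow_cases _ h with h | h | ⟨x, y, c, hw, hx, hc, hy⟩
    · exact ih _ (by omega) w h
    · exact ih _ (by omega) w h
    · obtain ⟨d, hd⟩ : ∃ d, a (n + 2) = c + 1 + d := ⟨a (n + 2) - (c + 1), by omega⟩
      have hgood : y <+: (List.replicate (c + 1) (sWord a (n + 2))).flatten → Dec a w := by
        intro hy
        refine ⟨n + 1, by omega, x, y, Or.inl hx, ?_, hw⟩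
        show y <+: sWord a (n + 3)
        rw [hS, hd, rep_split, List.append_assoc]
        exact hy.trans (List.prefix_append _ _)
      rcases Nat.eq_zero_or_pos n with rfl | hn
      · rcases pre_append_cases hy with hy | ⟨r, hy, hr⟩
        · apply hgood
          rw [rep_split]
          exact hy.trans (List.prefix_append _ _)
        · rw [zero_add, sWord] at hr
          rcases List.prefix_cons_iff.1 hr with hr | ⟨t, hr, hr'⟩
          · apply hgood
            rw [rep_split, hy, hr, List.append_nil]
            exact List.prefix_append _ _
          · rw [List.prefix_nil] at hr'
            subst hr'
            apply dec_suffix a w 3 (by omega)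
            rw [show (3 : ℕ) = 0 + 3 from rfl, hS, hw, hy, hr,
              show a (0 + 2) = d + (1 + c) by omega, rep_split, rep_split]
            obtain ⟨z, hz⟩ := hx
            refine ⟨(List.replicate d (sWord a (0 + 2))).flatten ++ z, ?_⟩
            have h1 : sWord a (0 + 1) = [0] := by simp [sWord]
            rw [h1]
            generalize sWord a (0 + 2) = T at hz ⊢
            subst hz
            simp
      · apply hgood
        obtain ⟨k, rfl⟩ : ∃ k, n = k + 1 := ⟨n - 1, by omega⟩
        refine hy.trans ?_
        rw [rep_split]
        have := pre_succ a ha k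
        simpa [List.prefix_append_right_inj] using this

lemma length_lb (a : ℕ → ℕ) (ha : ∀ n, 1 ≤ a n) (n : ℕ) :
    n + 1 ≤ (sWord a (n + 2)).length ∧ 1 ≤ (sWord a (n + 1)).length := by
  induction n with
  | zero => simp [sWord]
  | succ n ih =>
    refine ⟨?_, le_trans (by omega) ih.1⟩
    rw [show n + 1 + 2 = n + 3 from rfl, sWord.eq_4, List.length_append, List.length_flatten]
    simp only [List.map_replicate, List.sum_replicate, smul_eq_mul]
    have := Nat.le_mul_of_pos_left (sWord a (n + 2)).length (ha (n + 2))
    omega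

lemma flatten_cases {w : List ℝ} (l : List (List ℝ)) (hw : w ≠ []) (h : w <:+: l.flatten) :
    (∃ A ∈ l, w <:+: A) ∨ ∃ x y, w = x ++ y ∧ (∃ A ∈ l, x <:+ A) ∧
      ∃ l', l' ⊆ l ∧ y <+: l'.flatten := by
  induction l with
  | nil => simp at h; exact absurd h hw
  | cons A l ih =>
    rw [List.flatten_cons] at h
    rcases inf_append_cases h with h | h | ⟨x, y, hw, hx, hy⟩
    · exact Or.inl ⟨A, by simp, h⟩
    · rcases ih h with ⟨B, hB, h⟩ | ⟨x, y, hw, ⟨B, hB, hx⟩, l', hl, hy⟩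
      · exact Or.inl ⟨B, by simp [hB], h⟩
      · exact Or.inr ⟨x, y, hw, ⟨B, by simp [hB], hx⟩, l', fun z hz => by simp [hl hz], hy⟩
    · exact Or.inr ⟨x, y, hw, ⟨A, by simp, hx⟩, l, by simp, hy⟩

lemma flatMap_psi (a : ℕ → ℕ) (n : ℕ) (u : List ℤ) : ∃ l : List (List ℝ),
    (∀ A ∈ l, A = sWord a (n + 1) ∨ A = sWord a n) ∧ u.flatMap (psi a n) = l.flatten := by
  induction u with
  | nil => exact ⟨[], by simp, by simp⟩
  | cons e u ih =>
    obtain ⟨l, hl, hu⟩ := ih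
    by_cases he : e = 1
    · refine ⟨sWord a (n + 1) :: sWord a n :: l, ?_, ?_⟩
      · simpa using hl
      · simp [hu, psi, he]
    · refine ⟨sWord a (n + 1) :: l, ?_, ?_⟩
      · simpa using hl
      · simp [hu, psi, he]

lemma dec_of_level (a : ℕ → ℕ) (ha : ∀ n, 1 ≤ a n) (w : List ℝ) (hw : w ≠ []) (u : List ℤ)
    (h : w <:+: u.flatMap (psi a (w.length + 2))) : Dec a w := by
  set n := w.length with hn
  obtain ⟨l, hl, hu⟩ := flatMap_psi a (n + 2) u
  rw [hu] at h
  rcases flatten_cases l hw h with ⟨A, hA, h⟩ | ⟨x, y, hxy, ⟨A, hA, hx⟩, l', hl', hy⟩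
  · rcases hl A hA with rfl | rfl
    · exact dec_factor a ha _ w h
    · exact dec_factor a ha _ w h
  · refine ⟨n + 2, by omega, x, y, ?_, ?_, hxy⟩
    · rcases hl A hA with rfl | rfl
      · exact Or.inl hx
      · exact Or.inr hx
    · have p1 := pre_succ a ha n
      have p2 := pre_succ a ha (n + 1)
      show y <+: sWord a (n + 1 + 3)
      match l', hl', hy with
      | [], _, hy => simp at hy; simp [hy]
      | B :: l'', hl', hy =>
        have hyl : y.length ≤ n := by rw [hn, hxy]; simp
        have hB : B <+: sWord a (n + 1 + 2) ∧ y.length ≤ B.length := by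
          have b1 := (length_lb a ha n).1
          have b2 := (length_lb a ha (n + 1)).1
          rcases hl B (hl' (by simp)) with rfl | rfl
          · exact ⟨List.prefix_rfl, by
              rw [show n + 2 + 1 = n + 1 + 2 by omega]; omega⟩
          · exact ⟨p1, by omega⟩
        rw [List.flatten_cons] at hy
        exact (List.prefix_of_prefix_length_le hy (List.prefix_append _ _) hB.2).trans
          (hB.1.trans p2)

lemma sturmian_eq (α θ : ℝ) (hα : α ∈ Set.Ioo (0 : ℝ) 1) (n : ℤ) :
    sturmian α θ n = ((D (fun n : ℤ => ⌊(n : ℝ) * α + θ⌋) n : ℤ) : ℝ) := by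
  obtain ⟨h0, h1⟩ := hα
  have f1 := Int.fract_nonneg ((n : ℝ) * α + θ)
  have f2 := Int.fract_lt_one ((n : ℝ) * α + θ)
  have f3 := Int.floor_add_fract ((n : ℝ) * α + θ)
  simp only [sturmian, D, Set.mem_Ico]
  split_ifs with h
  · have : ⌊((n + 1 : ℤ) : ℝ) * α + θ⌋ = ⌊(n : ℝ) * α + θ⌋ + 1 := by
      rw [Int.floor_eq_iff]; push_cast; constructor <;> linarith [h.1]
    rw [this]; simp
  · have h' : Int.fract ((n : ℝ) * α + θ) < 1 - α := by
      by_contra hc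
      exact h ⟨not_lt.1 hc, f2⟩
    have : ⌊((n + 1 : ℤ) : ℝ) * α + θ⌋ = ⌊(n : ℝ) * α + θ⌋ := by
      rw [Int.floor_eq_iff]; push_cast; constructor <;> linarith
    rw [this]; simp

lemma bal_floor (α θ : ℝ) : Bal α (fun n : ℤ => ⌊(n : ℝ) * α + θ⌋) := by
  intro i j _
  have f1 := Int.floor_le ((i : ℝ) * α + θ)
  have f2 := Int.lt_floor_add_one ((i : ℝ) * α + θ)
  have f3 := Int.floor_le ((j : ℝ) * α + θ)
  have f4 := Int.lt_floor_add_one ((j : ℝ) * α + θ)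
  rw [abs_lt]
  constructor <;> linarith

end SturmDec

theorem Walpha_decomposition
    (α : ℝ) (hirr : Irrational α) (hα : α ∈ Set.Ioo (0 : ℝ) 1) :
    ∀ w ∈ Walpha α, ∃ t : ℕ, 1 ≤ t ∧ ∃ x y : List ℝ,
      (x <:+ sWord (cfCoeff α) (t + 1) ∨ x <:+ sWord (cfCoeff α) t) ∧
      y <+: sWord (cfCoeff α) (t + 2) ∧ w = x ++ y := by
  rintro w ⟨θ, -, hw, k, hk⟩
  obtain ⟨h', -, m, M, hm⟩ := SturmDec.level α hirr hα _ (SturmDec.bal_floor α θ) k w.length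
    (w.length + 1)
  refine SturmDec.dec_of_level (cfCoeff α) (SturmDec.cf_coeff_pos α hirr hα) w hw
    (SturmDec.seg (SturmDec.D h') m M) ?_
  · have e : w = (SturmDec.seg (SturmDec.D (fun n : ℤ => ⌊(n : ℝ) * α + θ⌋)) k w.length).map
        (fun z : ℤ => (z : ℝ)) := by
      conv_lhs => rw [hk]
      rw [show (do let a ← List.range w.length; pure ((a : ℕ) : ℤ)) =
        (List.range w.length).map (fun a : ℕ => (a : ℤ)) by
          simp [List.map_eq_flatMap]]
      simp only [SturmDec.seg, List.map_map]
      apply List.map_congr_left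
      intro i _
      simp only [Function.comp]
      exact SturmDec.sturmian_eq α θ hα _
    rw [← e] at hm
    exact hm
end
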